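/- arXiv:1910.12474 — 5 statements merged into one kernel-verified Lean document; each statement's English description precedes it below -/
import Mathlib

section
/- If G is a triangle-free graph on at least 3 vertices with m edges, and λ₁, λ₂ denote the largest and second largest eigenvalues of its adjacency matrix, then λ₁² + λ₂² ≤ m. -/
open Matrix Finset

/-- The adjacency matrix of a finite simple graph is Hermitian (over `ℝ`). -/
theorem adjMatrix_isHermitian {V : Type*} [Fintype V] [DecidableEq V]
    (G : SimpleGraph V) [DecidableRel G.Adj] : (G.adjMatrix ℝ).IsHermitian := by
  unfold Matrix.IsHermitian
  rw [Matrix.conjTranspose_eq_transpose_of_trivial]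
  exact G.isSymm_adjMatrix

/-- The eigenvalues of the adjacency matrix of `G`, as a tuple indexed by `Fin (card V)`. -/
noncomputable def adjEig {V : Type*} [Fintype V] [DecidableEq V]
    (G : SimpleGraph V) [DecidableRel G.Adj] : Fin (Fintype.card V) → ℝ :=
  fun i => (adjMatrix_isHermitian G).eigenvalues ((Fintype.equivFin V).symm i)

/-- `kthEig G k` is the `(k+1)`-st largest adjacency eigenvalue of `G`
(so `kthEig G 0 = λ₁`, `kthEig G 1 = λ₂`, ...); it is `0` if `k` is out of range. -/
noncomputable def kthEig {V : Type*} [Fintype V] [DecidableEq V]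
    (G : SimpleGraph V) [DecidableRel G.Adj] (k : ℕ) : ℝ :=
  if h : k < Fintype.card V then
    adjEig G (Tuple.sort (adjEig G) (Fin.rev ⟨k, h⟩))
  else 0


/-!
In terms of the spectrum `λ₁ ≥ λ₂ ≥ ... ≥ λₙ`, triangle-freeness says that `∑ λᵢ ^ 3`, the trace
of the cube of the adjacency matrix, vanishes, while `∑ λᵢ = 0` and `∑ λᵢ ^ 2 = 2m`. Hence
`λ₁ ^ 3 + λ₂ ^ 3 = -∑_{i ≥ 3} λᵢ ^ 3 ≤ ∑_{i ≥ 3} |λᵢ| ^ 3`. Each `|λᵢ|` is at most `λ₁` by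
Perron-Frobenius, and by convexity of `t ↦ t ^ (3 / 2)` a family of numbers in `[0, λ₁]` whose
cubes add up to at least `λ₁ ^ 3 + λ₂ ^ 3` has squares adding up to at least `λ₁ ^ 2 + λ₂ ^ 2`.
So `2m ≥ 2 (λ₁ ^ 2 + λ₂ ^ 2)`. This needs `λ₂ ≥ 0`, which is forced by the vanishing of `∑ λᵢ` and
`∑ λᵢ ^ 3` as soon as `n ≥ 3`.
-/

section PowerSums

variable {ι R : Type*} [CommRing R] [LinearOrder R] [IsStrictOrderedRing R]

lemma sum_pow_three_le_mul_sum_sq {s : Finset ι} {x : ι → R} {c : R} (hx : ∀ i ∈ s, x i ≤ c) :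
    ∑ i ∈ s, x i ^ 3 ≤ c * ∑ i ∈ s, x i ^ 2 := by
  rw [mul_sum]
  refine sum_le_sum fun i hi => ?_
  rw [pow_succ' (x i) 2]
  exact mul_le_mul_of_nonneg_right (hx i hi) (sq_nonneg _)

lemma sum_pow_three_le_sqrt_sum_sq_pow_three (s : Finset ι) (x : ι → ℝ) :
    ∑ i ∈ s, x i ^ 3 ≤ √(∑ i ∈ s, x i ^ 2) ^ 3 := by
  have le_sqrt : ∀ i ∈ s, x i ≤ √(∑ j ∈ s, x j ^ 2) := fun i hi =>
    Real.le_sqrt_of_sq_le (single_le_sum (f := fun j => x j ^ 2) (fun _ _ => sq_nonneg _) hi)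
  calc ∑ i ∈ s, x i ^ 3 ≤ √(∑ i ∈ s, x i ^ 2) * ∑ i ∈ s, x i ^ 2 :=
        sum_pow_three_le_mul_sum_sq le_sqrt
    _ = √(∑ i ∈ s, x i ^ 2) ^ 3 := by
        rw [pow_succ' _ 2, Real.sq_sqrt (sum_nonneg fun _ _ => sq_nonneg _)]

-- Twice the tangent line inequality for the convex function `t ↦ t ^ (3 / 2)` at `t = v ^ 2`.
lemma three_mul_mul_sq_sub_sq_le {u v : R} (hu : 0 ≤ u) (hv : 0 ≤ v) :
    3 * v * (u ^ 2 - v ^ 2) ≤ 2 * (u ^ 3 - v ^ 3) := by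
  have : 0 ≤ (u - v) ^ 2 * (2 * u + v) := by positivity
  linarith

lemma sq_add_sq_le_of_pow_three_add_pow_three_le {a b t y : R} (hb : 0 ≤ b) (ht : 0 ≤ t)
    (hy : 0 ≤ y) (hta : t ≤ a) (hya : y ≤ a) (h : a ^ 3 + b ^ 3 ≤ t ^ 3 + y ^ 3) :
    a ^ 2 + b ^ 2 ≤ t ^ 2 + y ^ 2 := by
  wlog hyt : y ≤ t generalizing t y
  · rw [add_comm (t ^ 2)]
    exact this hy ht hya hta (by rwa [add_comm (y ^ 3)]) (le_of_not_ge hyt)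
  have ha : 0 ≤ a := ht.trans hta
  rcases hy.eq_or_lt with rfl | hy
  · have hb0 : b = 0 := by
      have := pow_le_pow_left₀ ht hta 3
      exact pow_eq_zero_iff three_ne_zero |>.1 (le_antisymm (by linarith) (by positivity))
    subst hb0
    have : a ≤ t := le_of_pow_le_pow_left₀ three_ne_zero ht (by linarith)
    gcongr
  · have tangent_t := three_mul_mul_sq_sub_sq_le ha ht
    have tangent_y := three_mul_mul_sq_sub_sq_le hb hy.le
    have slopes : y * (a ^ 2 - t ^ 2) ≤ t * (a ^ 2 - t ^ 2) :=
      mul_le_mul_of_nonneg_right hyt (sub_nonneg.2 (by gcongr))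
    have : y * (a ^ 2 + b ^ 2) ≤ y * (t ^ 2 + y ^ 2) := by linarith
    exact le_of_mul_le_mul_left this hy

-- Among the families with entries in `[0, a]` and a given sum of cubes, the sum of squares is
-- least when the mass is concentrated as much as the cap `a` allows.
lemma sq_add_sq_le_sum_sq_of_pow_three_add_pow_three_le {s : Finset ι} {x : ι → ℝ} {a b : ℝ}
    (hb : 0 ≤ b) (hba : b ≤ a) (hx : ∀ i ∈ s, 0 ≤ x i) (hxa : ∀ i ∈ s, x i ≤ a)
    (h : a ^ 3 + b ^ 3 ≤ ∑ i ∈ s, x i ^ 3) : a ^ 2 + b ^ 2 ≤ ∑ i ∈ s, x i ^ 2 := by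
  classical
  by_cases hxb : ∀ i ∈ s, x i ≤ b
  · have cubes : b * (a ^ 2 + b ^ 2) ≤ b * ∑ i ∈ s, x i ^ 2 :=
      calc b * (a ^ 2 + b ^ 2) = b * a ^ 2 + b ^ 3 := by ring
        _ ≤ a * a ^ 2 + b ^ 3 := by gcongr
        _ = a ^ 3 + b ^ 3 := by ring
        _ ≤ ∑ i ∈ s, x i ^ 3 := h
        _ ≤ b * ∑ i ∈ s, x i ^ 2 := sum_pow_three_le_mul_sum_sq hxb
    rcases hb.eq_or_lt with rfl | hb
    · have ha0 : a = 0 := by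
        have := h.trans (sum_pow_three_le_mul_sum_sq hxb)
        exact pow_eq_zero_iff three_ne_zero |>.1 (le_antisymm (by linarith) (by positivity))
      subst ha0
      simpa using sum_nonneg fun i _ => sq_nonneg (x i)
    · exact le_of_mul_le_mul_left cubes hb
  · push Not at hxb
    obtain ⟨k, hk, hbk⟩ := hxb
    set y := √(∑ i ∈ s.erase k, x i ^ 2)
    have hy : ∑ i ∈ s.erase k, x i ^ 2 = y ^ 2 :=
      (Real.sq_sqrt (sum_nonneg fun _ _ => sq_nonneg _)).symm
    rw [← add_sum_erase s _ hk, hy]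
    rcases le_total a y with hay | hya
    · have : 0 ≤ a := hb.trans hba
      rw [add_comm]
      gcongr
    · refine sq_add_sq_le_of_pow_three_add_pow_three_le hb (hx k hk) (Real.sqrt_nonneg _)
        (hxa k hk) hya (h.trans ?_)
      rw [← add_sum_erase s _ hk]
      gcongr
      exact sum_pow_three_le_sqrt_sum_sq_pow_three _ _

variable [Fintype ι]

lemma card_le_two_of_sum_eq_zero_of_sum_pow_three_eq_zero {f : ι → R} {p : ι}
    (hp : ∀ i, |f i| ≤ f p) (hneg : ∀ i ≠ p, f i < 0)
    (h1 : ∑ i, f i = 0) (h3 : ∑ i, f i ^ 3 = 0) : Fintype.card ι ≤ 2 := by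
  classical
  have hsum : ∑ i, f i * (f p ^ 2 - f i ^ 2) = 0 := by
    simp only [mul_sub, sum_sub_distrib, ← sum_mul, ← pow_succ', h1, h3, zero_mul, sub_zero]
  have hnonpos : ∀ i ∈ univ, f i * (f p ^ 2 - f i ^ 2) ≤ 0 := fun i _ => by
    obtain rfl | hi := eq_or_ne i p
    · simp
    · exact mul_nonpos_of_nonpos_of_nonneg (hneg i hi).le
        (sub_nonneg.2 (sq_le_sq.2 ((hp i).trans (le_abs_self _))))
  have heq : ∀ i ≠ p, f i = -f p := fun i hi => by
    have := (sum_eq_zero_iff_of_nonpos hnonpos).1 hsum i (mem_univ i)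
    have hsq := (mul_eq_zero.1 this).resolve_left (hneg i hi).ne
    obtain h | h := sq_eq_sq_iff_eq_or_eq_neg.1 (sub_eq_zero.1 hsq)
    · exact absurd ((abs_nonneg _).trans (hp i)) (by linarith [hneg i hi])
    · linarith
  by_contra! hcard
  obtain ⟨q, hq⟩ := Fintype.exists_ne_of_one_lt_card (by lia : 1 < Fintype.card ι) p
  have hpos : 0 < f p := by linarith [hneg q hq, heq q hq]
  rw [← add_sum_erase univ f (mem_univ p),
    sum_congr rfl fun i hi => heq i (ne_of_mem_erase hi), sum_const,
    card_erase_of_mem (mem_univ p), card_univ, nsmul_eq_mul] at h1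
  have : (2 : R) ≤ (Fintype.card ι - 1 : ℕ) := by
    exact_mod_cast (by lia : 2 ≤ Fintype.card ι - 1)
  nlinarith

lemma two_mul_sq_add_sq_le_sum_sq {f : ι → ℝ} {p q : ι} (hcard : 2 < Fintype.card ι)
    (hqp : q ≠ p) (hp : ∀ i, |f i| ≤ f p) (hq : ∀ i ≠ p, f i ≤ f q)
    (h1 : ∑ i, f i = 0) (h3 : ∑ i, f i ^ 3 = 0) :
    2 * (f p ^ 2 + f q ^ 2) ≤ ∑ i, f i ^ 2 := by
  classical
  have hq0 : 0 ≤ f q := by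
    by_contra! hneg
    exact hcard.not_ge <| card_le_two_of_sum_eq_zero_of_sum_pow_three_eq_zero hp
      (fun i hi => (hq i hi).trans_lt hneg) h1 h3
  have split (g : ι → ℝ) : ∑ i, g i = g p + g q + ∑ i ∈ {p, q}ᶜ, g i := by
    rw [← sum_pair hqp.symm, sum_add_sum_compl]
  have hcubes : f p ^ 3 + f q ^ 3 ≤ ∑ i ∈ {p, q}ᶜ, |f i| ^ 3 :=
    calc f p ^ 3 + f q ^ 3 = ∑ i ∈ {p, q}ᶜ, -f i ^ 3 := by
          rw [sum_neg_distrib]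
          linarith [split fun i => f i ^ 3]
      _ ≤ ∑ i ∈ {p, q}ᶜ, |f i| ^ 3 := by
          refine sum_le_sum fun i _ => ?_
          rw [← abs_pow]
          exact neg_le_abs _
  have hsquares : f p ^ 2 + f q ^ 2 ≤ ∑ i ∈ {p, q}ᶜ, |f i| ^ 2 :=
    sq_add_sq_le_sum_sq_of_pow_three_add_pow_three_le hq0 ((le_abs_self _).trans (hp q))
      (fun _ _ => abs_nonneg _) (fun i _ => hp i) hcubes
  simp only [sq_abs] at hsquares
  linarith [split fun i => f i ^ 2]

end PowerSums

section Spectrum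

variable {n 𝕜 : Type*} [Fintype n]

lemma abs_dotProduct_mulVec_le {A : Matrix n n ℝ} (hA : ∀ i j, 0 ≤ A i j) (x : n → ℝ) :
    |x ⬝ᵥ A *ᵥ x| ≤ |x| ⬝ᵥ A *ᵥ |x| := by
  simp only [dotProduct, mulVec, mul_sum]
  refine (abs_sum_le_sum_abs _ _).trans (sum_le_sum fun i _ => ?_)
  refine (abs_sum_le_sum_abs _ _).trans (sum_le_sum fun j _ => ?_)
  rw [abs_mul, abs_mul, abs_of_nonneg (hA i j), Pi.abs_apply, Pi.abs_apply]

variable [DecidableEq n] [RCLike 𝕜]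

lemma sum_eigenvalues_pow_eq_trace_pow {A : Matrix n n 𝕜} (hA : A.IsHermitian) (k : ℕ) :
    ∑ i, (hA.eigenvalues i : 𝕜) ^ k = (A ^ k).trace := by
  conv_rhs => rw [hA.spectral_theorem]
  rw [← map_pow, Unitary.conjStarAlgAut_apply, trace_mul_cycle]
  simp [diagonal_pow, trace]

open scoped ComplexOrder MatrixOrder in
lemma star_dotProduct_mulVec_le_of_eigenvalues_le {A : Matrix n n 𝕜} (hA : A.IsHermitian) {M : ℝ}
    (hM : ∀ i, hA.eigenvalues i ≤ M) (x : n → 𝕜) :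
    star x ⬝ᵥ A *ᵥ x ≤ M * (star x ⬝ᵥ x) := by
  have hle : A ≤ algebraMap ℝ (Matrix n n 𝕜) M :=
    le_algebraMap_of_spectrum_le (fun r hr => by
      rw [hA.spectrum_real_eq_range_eigenvalues] at hr
      obtain ⟨i, rfl⟩ := hr
      exact hM i) hA
  have := (Matrix.le_iff.1 hle).dotProduct_mulVec_nonneg x
  rw [Algebra.algebraMap_eq_smul_one, sub_mulVec, dotProduct_sub, smul_mulVec, one_mulVec,
    dotProduct_smul, RCLike.real_smul_eq_coe_mul] at this
  exact sub_nonneg.1 this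

lemma abs_eigenvalues_le_of_nonneg {A : Matrix n n ℝ} (hA : A.IsHermitian)
    (hA0 : ∀ i j, 0 ≤ A i j) {M : ℝ} (hM : ∀ i, hA.eigenvalues i ≤ M) (i : n) :
    |hA.eigenvalues i| ≤ M := by
  set x : n → ℝ := ⇑(hA.eigenvectorBasis i)
  have hx : 0 < x ⬝ᵥ x := by
    have : x ≠ 0 := fun h =>
      hA.eigenvectorBasis.toBasis.ne_zero i (by ext j; simpa using congrFun h j)
    simpa using dotProduct_star_self_pos_iff.2 this
  have habs : |x| ⬝ᵥ |x| = x ⬝ᵥ x := by simp [dotProduct]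
  refine le_of_mul_le_mul_right ?_ hx
  calc |hA.eigenvalues i| * (x ⬝ᵥ x) = |x ⬝ᵥ A *ᵥ x| := by
        rw [hA.mulVec_eigenvectorBasis, dotProduct_smul, smul_eq_mul, abs_mul, abs_of_pos hx]
    _ ≤ |x| ⬝ᵥ A *ᵥ |x| := abs_dotProduct_mulVec_le hA0 x
    _ ≤ M * (|x| ⬝ᵥ |x|) := by
        simpa using star_dotProduct_mulVec_le_of_eigenvalues_le hA hM |x|
    _ = M * (x ⬝ᵥ x) := by rw [habs]

end Spectrum

section Graph

variable {V : Type*} {G : SimpleGraph V}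

lemma length_ne_three_of_cliqueFree_three (hG : G.CliqueFree 3) {u : V} (p : G.Walk u u) :
    p.length ≠ 3 := by
  classical
  intro hp
  match p, hp with
  | .cons (v := v) huv (.cons (v := w) hvw (.cons hwu .nil)), _ =>
    exact hG {u, v, w} (SimpleGraph.is3Clique_triple_iff.2 ⟨huv, hwu.symm, hvw⟩)

variable [Fintype V] [DecidableEq V] [DecidableRel G.Adj]

lemma trace_adjMatrix_pow_three_eq_zero (R : Type*) [Semiring R] (hG : G.CliqueFree 3) :
    (G.adjMatrix R ^ 3).trace = 0 := by
  refine sum_eq_zero fun u _ => ?_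
  have : IsEmpty {p : G.Walk u u | p.length = 3} :=
    ⟨fun p => length_ne_three_of_cliqueFree_three hG p.1 p.2⟩
  rw [diag_apply, G.adjMatrix_pow_apply_eq_card_walk, Fintype.card_eq_zero, Nat.cast_zero]

variable (G) in
lemma trace_adjMatrix_sq_eq_two_mul_card_edgeFinset (R : Type*) [Semiring R] :
    (G.adjMatrix R ^ 2).trace = 2 * (#G.edgeFinset : R) := by
  simp only [sq, trace, diag_apply, SimpleGraph.adjMatrix_mul_self_apply_self]
  exact_mod_cast congrArg (Nat.cast (R := R)) G.sum_degrees_eq_twice_card_edges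

variable (G) in
lemma exists_equiv_antitone_kthEig_eq :
    ∃ e : Fin (Fintype.card V) ≃ V, Antitone ((adjMatrix_isHermitian G).eigenvalues ∘ e) ∧
      ∀ k : Fin (Fintype.card V), kthEig G k = (adjMatrix_isHermitian G).eigenvalues (e k) := by
  refine ⟨(Fin.revPerm.trans (Tuple.sort (adjEig G))).trans (Fintype.equivFin V).symm, ?_, ?_⟩
  · exact (Tuple.monotone_sort (adjEig G)).comp_antitone Fin.rev_anti
  · exact fun k => dif_pos k.isLt

variable (G) in
lemma exists_kthEig_zero_kthEig_one (hV : 1 < Fintype.card V) :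
    ∃ p q : V, q ≠ p ∧
      kthEig G 0 = (adjMatrix_isHermitian G).eigenvalues p ∧
      kthEig G 1 = (adjMatrix_isHermitian G).eigenvalues q ∧
      (∀ v, (adjMatrix_isHermitian G).eigenvalues v ≤ (adjMatrix_isHermitian G).eigenvalues p) ∧
      ∀ v ≠ p, (adjMatrix_isHermitian G).eigenvalues v ≤
        (adjMatrix_isHermitian G).eigenvalues q := by
  obtain ⟨e, hanti, hk⟩ := exists_equiv_antitone_kthEig_eq G
  set i₀ : Fin (Fintype.card V) := ⟨0, by lia⟩
  set i₁ : Fin (Fintype.card V) := ⟨1, hV⟩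
  refine ⟨e i₀, e i₁, e.injective.ne (by simp [i₀, i₁]), hk i₀, hk i₁, fun v => ?_, fun v hv => ?_⟩
  · simpa using hanti (show i₀ ≤ e.symm v from Nat.zero_le _)
  · have hne : (e.symm v : ℕ) ≠ 0 := fun h => hv (e.symm_apply_eq.1 (Fin.ext h))
    simpa using hanti (show i₁ ≤ e.symm v from Nat.one_le_iff_ne_zero.2 hne)

end Graph

/-- If `G` is a triangle-free graph on at least 3 vertices with `m` edges, then
`λ₁² + λ₂² ≤ m`. -/
theorem stmt_0 {V : Type*} [Fintype V] [DecidableEq V] (G : SimpleGraph V)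
    [DecidableRel G.Adj] (hn : 3 ≤ Fintype.card V) (h3 : G.CliqueFree 3) :
    (kthEig G 0) ^ 2 + (kthEig G 1) ^ 2 ≤ (G.edgeFinset.card : ℝ) := by
  obtain ⟨p, q, hqp, hp, hq, hmax, hmax'⟩ := exists_kthEig_zero_kthEig_one G (by lia)
  have sum_pow := sum_eigenvalues_pow_eq_trace_pow (adjMatrix_isHermitian G)
  have adj_nonneg (u v : V) : 0 ≤ G.adjMatrix ℝ u v := by
    rw [SimpleGraph.adjMatrix_apply]; positivity
  have key := two_mul_sq_add_sq_le_sum_sq hn hqp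
    (abs_eigenvalues_le_of_nonneg _ adj_nonneg hmax) hmax'
    (by simpa using sum_pow 1)
    ((sum_pow 3).trans (trace_adjMatrix_pow_three_eq_zero ℝ h3))
  have sum_sq := (sum_pow 2).trans (trace_adjMatrix_sq_eq_two_mul_card_edgeFinset G ℝ)
  simp only [RCLike.ofReal_real_eq_id, id_eq] at sum_sq
  rw [hp, hq]
  linarith
end

section
/- If G is a non-bipartite graph with m edges whose largest adjacency eigenvalue λ₁ satisfies λ₁ ≥ √(m−1), then G contains a triangle, unless G is the disjoint union of a 5-cycle and isolated vertices. -/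
open Matrix Finset

/-!
A shortest odd closed walk of `G` spans an induced odd cycle `Cₙ`, and `n ≥ 5` when `G` is
triangle-free. The spectrum of `Cₙ` consists of the numbers `2 cos (2πj/n)`: three eigenvalues are
at least `2 cos (2π/5) > 3/5`, and two are at most `-2 cos (π/5) < -8/5`. By Cauchy interlacing `G`
has at least as many eigenvalues in both ranges. Moreover `∑ λ² = 2m`, and `∑ λ³ = 0` because there
is no triangle. So the cubes of the negative eigenvalues must balance `λ₁³ + 2 (3/5)³`; as two of
them are at most `-8/5`, convexity shows that this needs `∑ λ² > 2 (λ₁² + 1)` as soon as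
`λ₁² ≥ 5`, that is `λ₁² < m - 1`. Hence `m ≤ 5`, and the five-cycle uses up all the edges.
-/

open Module (finrank)
open scoped InnerProductSpace

section Interlacing

variable {𝕜 E F ι κ : Type*} [RCLike 𝕜] [Fintype ι] [Fintype κ]
  [NormedAddCommGroup E] [InnerProductSpace 𝕜 E] [NormedAddCommGroup F] [InnerProductSpace 𝕜 F]

theorem re_inner_apply_self_eq_sum {T : E →ₗ[𝕜] E} {b : OrthonormalBasis ι 𝕜 E} {lam : ι → ℝ}
    (hb : ∀ i, T (b i) = (lam i : 𝕜) • b i) (x : E) :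
    RCLike.re ⟪x, T x⟫_𝕜 = ∑ i, lam i * ‖⟪b i, x⟫_𝕜‖ ^ 2 := by
  have hT : T x = ∑ i, ⟪b i, x⟫_𝕜 • (lam i : 𝕜) • b i := by
    conv_lhs => rw [← b.sum_repr' x, map_sum]
    simp only [map_smul, hb]
  rw [hT, inner_sum, map_sum]
  refine sum_congr rfl fun i _ => ?_
  rw [inner_smul_right, inner_smul_right, mul_left_comm, ← inner_conj_symm x, RCLike.mul_conj]
  norm_cast

theorem mul_norm_sq_le_re_inner_apply_self {T : E →ₗ[𝕜] E} {b : OrthonormalBasis ι 𝕜 E}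
    {lam : ι → ℝ} (hb : ∀ i, T (b i) = (lam i : 𝕜) • b i) {c : ℝ} {x : E}
    (hx : ∀ i, lam i < c → ⟪b i, x⟫_𝕜 = 0) : c * ‖x‖ ^ 2 ≤ RCLike.re ⟪x, T x⟫_𝕜 := by
  rw [re_inner_apply_self_eq_sum hb, ← b.sum_sq_norm_inner_right, mul_sum]
  refine sum_le_sum fun i _ => ?_
  obtain hi | hi := lt_or_ge (lam i) c
  · simp [hx i hi]
  · gcongr

theorem re_inner_apply_self_lt_mul_norm_sq {T : E →ₗ[𝕜] E} {b : OrthonormalBasis ι 𝕜 E}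
    {lam : ι → ℝ} (hb : ∀ i, T (b i) = (lam i : 𝕜) • b i) {c : ℝ} {x : E} (hx0 : x ≠ 0)
    (hx : ∀ i, c ≤ lam i → ⟪b i, x⟫_𝕜 = 0) : RCLike.re ⟪x, T x⟫_𝕜 < c * ‖x‖ ^ 2 := by
  obtain ⟨k, hk⟩ : ∃ k, ⟪b k, x⟫_𝕜 ≠ 0 := by
    by_contra! h
    exact hx0 (b.toBasis.ext_elem fun i => by simpa [b.repr_apply_apply] using h i)
  have hlt {i : ι} (hi : ⟪b i, x⟫_𝕜 ≠ 0) : lam i < c := not_le.mp fun h => hi (hx i h)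
  rw [re_inner_apply_self_eq_sum hb, ← b.sum_sq_norm_inner_right, mul_sum]
  refine sum_lt_sum (fun i _ => ?_) ⟨k, mem_univ k, ?_⟩
  · by_cases hi : ⟪b i, x⟫_𝕜 = 0
    · simp [hi]
    · gcongr
      exact (hlt hi).le
  · have := norm_pos_iff.mpr hk
    gcongr
    exact hlt hk

theorem card_eigenvalues_ge_le_of_isometry_compression {T : E →ₗ[𝕜] E} {b : OrthonormalBasis ι 𝕜 E}
    {lam : ι → ℝ} (hb : ∀ i, T (b i) = (lam i : 𝕜) • b i) {S : F →ₗ[𝕜] F}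
    {b' : OrthonormalBasis κ 𝕜 F} {mu : κ → ℝ} (hb' : ∀ j, S (b' j) = (mu j : 𝕜) • b' j)
    (J : F →ₗᵢ[𝕜] E) (hJ : ∀ x, ⟪J x, T (J x)⟫_𝕜 = ⟪x, S x⟫_𝕜) (c : ℝ) :
    #{j | c ≤ mu j} ≤ #{i | c ≤ lam i} := by
  by_contra! hlt
  let combination : ({j // c ≤ mu j} → 𝕜) →ₗ[𝕜] F :=
    Fintype.linearCombination 𝕜 fun j : {j // c ≤ mu j} => b' j
  let coords : F →ₗ[𝕜] {i // c ≤ lam i} → 𝕜 :=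
    LinearMap.pi fun i => innerₛₗ 𝕜 (b i) ∘ₗ J.toLinearMap
  have hker : LinearMap.ker (coords ∘ₗ combination) ≠ ⊥ := by
    apply LinearMap.ker_ne_bot_of_finrank_lt
    simpa [Fintype.card_subtype] using hlt
  obtain ⟨a, ha, ha0⟩ := (Submodule.ne_bot_iff _).mp hker
  -- `x` lies above level `c` for `S`, while `J x` lies below it for `T`.
  set x : F := combination a
  have hx0 : x ≠ 0 := by
    have hli : LinearIndependent 𝕜 fun j : {j // c ≤ mu j} => b' j :=
      b'.orthonormal.linearIndependent.comp _ Subtype.val_injective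
    exact (map_ne_zero_iff _ hli.fintypeLinearCombination_injective).mpr ha0
  have hlow : ∀ j, mu j < c → ⟪b' j, x⟫_𝕜 = 0 := by
    intro j hj
    simp only [x, combination, Fintype.linearCombination_apply, inner_sum, inner_smul_right]
    refine sum_eq_zero fun k _ => ?_
    rw [b'.inner_eq_zero (by rintro rfl; exact hj.not_ge k.2), mul_zero]
  have hhigh : ∀ i, c ≤ lam i → ⟪b i, J x⟫_𝕜 = 0 := fun i hi => congrFun ha ⟨i, hi⟩
  refine (mul_norm_sq_le_re_inner_apply_self hb' hlow).not_gt ?_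
  rw [← hJ, ← J.norm_map x]
  exact re_inner_apply_self_lt_mul_norm_sq hb ((map_ne_zero_iff J J.injective).mpr hx0) hhigh

theorem card_eigenvalues_le_le_of_isometry_compression {T : E →ₗ[𝕜] E} {b : OrthonormalBasis ι 𝕜 E}
    {lam : ι → ℝ} (hb : ∀ i, T (b i) = (lam i : 𝕜) • b i) {S : F →ₗ[𝕜] F}
    {b' : OrthonormalBasis κ 𝕜 F} {mu : κ → ℝ} (hb' : ∀ j, S (b' j) = (mu j : 𝕜) • b' j)
    (J : F →ₗᵢ[𝕜] E) (hJ : ∀ x, ⟪J x, T (J x)⟫_𝕜 = ⟪x, S x⟫_𝕜) (c : ℝ) :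
    #{j | mu j ≤ c} ≤ #{i | lam i ≤ c} := by
  simpa using card_eigenvalues_ge_le_of_isometry_compression (T := -T) (S := -S) (lam := -lam)
    (mu := -mu) (b := b) (b' := b') (by simp [hb]) (by simp [hb']) J (by simp [hJ]) (-c)

variable {V W : Type*} [Fintype V] [Fintype W]

theorem dotProduct_star_extend_zero {f : W → V} (hf : f.Injective) (x : W → 𝕜) (y : V → 𝕜) :
    y ⬝ᵥ star (Function.extend f x 0) = (y ∘ f) ⬝ᵥ star x := by
  refine (Fintype.sum_of_injective f hf _ _ (fun v hv => ?_) fun w => ?_).symm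
  · simp [Function.extend_apply' _ _ _ hv]
  · simp [hf.extend_apply]

theorem mulVec_extend_zero_comp {f : W → V} (hf : f.Injective) (A : Matrix V V 𝕜) (x : W → 𝕜) :
    (A *ᵥ Function.extend f x 0) ∘ f = A.submatrix f f *ᵥ x := by
  ext w
  refine (Fintype.sum_of_injective f hf _ _ (fun v hv => ?_) fun w' => ?_).symm
  · simp [Function.extend_apply' _ _ _ hv]
  · simp [hf.extend_apply]

variable (𝕜) in
/-- Extension by zero along an injection `f`, as an isometry. -/
noncomputable def extendByZeroIsometry {f : W → V} (hf : f.Injective) :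
    EuclideanSpace 𝕜 W →ₗᵢ[𝕜] EuclideanSpace 𝕜 V :=
  LinearMap.isometryOfInner
    ((WithLp.linearEquiv 2 𝕜 (V → 𝕜)).symm.toLinearMap ∘ₗ
      Function.ExtendByZero.linearMap 𝕜 f ∘ₗ (WithLp.linearEquiv 2 𝕜 (W → 𝕜)).toLinearMap)
    fun x y => by
      simp only [EuclideanSpace.inner_eq_star_dotProduct]
      exact (dotProduct_star_extend_zero hf x.ofLp _).trans <|
        congrArg (· ⬝ᵥ star x.ofLp) (funext fun w => hf.extend_apply _ _ w)

theorem inner_extendByZeroIsometry_toEuclideanLin [DecidableEq V] [DecidableEq W] {f : W → V}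
    (hf : f.Injective) (A : Matrix V V 𝕜) (x : EuclideanSpace 𝕜 W) :
    ⟪extendByZeroIsometry 𝕜 hf x, toEuclideanLin A (extendByZeroIsometry 𝕜 hf x)⟫_𝕜 =
      ⟪x, toEuclideanLin (A.submatrix f f) x⟫_𝕜 := by
  simp only [EuclideanSpace.inner_eq_star_dotProduct, ofLp_toLpLin, toLin'_apply,
    ← mulVec_extend_zero_comp hf]
  exact dotProduct_star_extend_zero hf _ _

variable [DecidableEq V] [DecidableEq W] {A : Matrix V V 𝕜} {B : Matrix W W 𝕜}

theorem toEuclideanLin_eigenvectorBasis (hA : A.IsHermitian) (i : V) :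
    toEuclideanLin A (hA.eigenvectorBasis i) = (hA.eigenvalues i : 𝕜) • hA.eigenvectorBasis i := by
  ext v
  rw [ofLp_toLpLin, toLin'_apply, hA.mulVec_eigenvectorBasis, RCLike.real_smul_eq_coe_smul (K := 𝕜)]
  rfl

theorem card_eigenvalues_ge_le_of_submatrix_eq (hA : A.IsHermitian) (hB : B.IsHermitian) {f : W → V}
    (hf : f.Injective) (h : A.submatrix f f = B) (c : ℝ) :
    #{j | c ≤ hB.eigenvalues j} ≤ #{i | c ≤ hA.eigenvalues i} := by
  subst h
  exact card_eigenvalues_ge_le_of_isometry_compression (toEuclideanLin_eigenvectorBasis hA)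
    (toEuclideanLin_eigenvectorBasis hB) (extendByZeroIsometry 𝕜 hf)
    (inner_extendByZeroIsometry_toEuclideanLin hf A) c

theorem card_eigenvalues_le_le_of_submatrix_eq (hA : A.IsHermitian) (hB : B.IsHermitian) {f : W → V}
    (hf : f.Injective) (h : A.submatrix f f = B) (c : ℝ) :
    #{j | hB.eigenvalues j ≤ c} ≤ #{i | hA.eigenvalues i ≤ c} := by
  subst h
  exact card_eigenvalues_le_le_of_isometry_compression (toEuclideanLin_eigenvectorBasis hA)
    (toEuclideanLin_eigenvectorBasis hB) (extendByZeroIsometry 𝕜 hf)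
    (inner_extendByZeroIsometry_toEuclideanLin hf A) c

end Interlacing

section Eigenvalues

variable {𝕜 V : Type*} [RCLike 𝕜] [Fintype V] [DecidableEq V] {A : Matrix V V 𝕜}

theorem card_eigenvalues_eq_finrank_eigenspace (hA : A.IsHermitian) (μ : ℝ) :
    #{i | hA.eigenvalues i = μ} = finrank 𝕜 (Module.End.eigenspace (toEuclideanLin A) (μ : 𝕜)) := by
  rw [← (isSymmetric_toEuclideanLin_iff.mpr hA).card_filter_eigenvalues_eq finrank_euclideanSpace]
  simp only [RCLike.ofReal_inj]
  exact card_equiv (Fintype.equivOfCardEq (Fintype.card_fin _)).symm fun i => by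
    simp only [mem_filter_univ]; rfl

theorem card_le_card_eigenvalues_eq {κ : Type*} [Fintype κ] (hA : A.IsHermitian) {μ : ℝ}
    {u : κ → V → 𝕜} (hu : LinearIndependent 𝕜 u) (h : ∀ j, A *ᵥ u j = (μ : 𝕜) • u j) :
    Fintype.card κ ≤ #{i | hA.eigenvalues i = μ} := by
  let e := (WithLp.linearEquiv 2 𝕜 (V → 𝕜)).symm
  have hmem (j : κ) : e (u j) ∈ Module.End.eigenspace (toEuclideanLin A) (μ : 𝕜) := by
    rw [Module.End.mem_eigenspace_iff]
    exact congrArg e (h j)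
  have hli : LinearIndependent 𝕜 fun j =>
      (⟨e (u j), hmem j⟩ : Module.End.eigenspace (toEuclideanLin A) (μ : 𝕜)) :=
    .of_comp (Submodule.subtype _) (hu.map' e.toLinearMap e.ker)
  rw [card_eigenvalues_eq_finrank_eigenspace]
  exact hli.fintype_card_le_finrank

theorem trace_pow_eq_sum_eigenvalues_pow (hA : A.IsHermitian) (k : ℕ) :
    (A ^ k).trace = ∑ i, (hA.eigenvalues i : 𝕜) ^ k := by
  conv_lhs => rw [hA.spectral_theorem, ← map_pow, Unitary.conjStarAlgAut_apply, trace_mul_cycle,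
    Unitary.coe_star_mul_self, one_mul, diagonal_pow, trace_diagonal]
  rfl

end Eigenvalues

section AdjMatrix

open SimpleGraph

variable {V R : Type*} [Fintype V] {G : SimpleGraph V} [DecidableRel G.Adj]

theorem trace_adjMatrix_sq [DecidableEq V] [Semiring R] :
    (G.adjMatrix R ^ 2).trace = 2 * (#G.edgeFinset : R) := by
  simp only [sq, trace, diag_apply, adjMatrix_mul_self_apply_self]
  exact_mod_cast congrArg (Nat.cast (R := R)) G.sum_degrees_eq_twice_card_edges

theorem trace_adjMatrix_cube_eq_zero [DecidableEq V] [Semiring R] (hG : G.CliqueFree 3) :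
    (G.adjMatrix R ^ 3).trace = 0 := by
  simp only [pow_succ, pow_zero, one_mul, trace, diag_apply, mul_apply, adjMatrix_apply,
    sum_mul]
  refine sum_eq_zero fun i _ => sum_eq_zero fun j _ => sum_eq_zero fun k _ => ?_
  simp only [mul_ite, mul_one, mul_zero, ite_eq_right_iff]
  intro hji hkj hik
  exact absurd (is3Clique_triple_iff.mpr ⟨hik, hji.symm, hkj⟩) (hG {i, k, j})

end AdjMatrix

section CycleSpectrum

open Real SimpleGraph

theorem cycleGraph_adjMatrix_mulVec_apply {R : Type*} [NonAssocSemiring R] {n : ℕ} [NeZero n]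
    (hn : 3 ≤ n) (x : Fin n → R) (v : Fin n) :
    ((cycleGraph n).adjMatrix R *ᵥ x) v = x (v - 1) + x (v + 1) := by
  obtain ⟨n, rfl⟩ := Nat.exists_eq_add_of_le' hn
  have hne : v - 1 ≠ v + 1 := by
    rw [ne_eq, sub_eq_iff_eq_add, add_assoc, left_eq_add]
    exact Fin.ne_of_val_ne (by simp [Fin.val_add, Nat.mod_eq_of_lt])
  rw [adjMatrix_mulVec_apply, cycleGraph_neighborFinset, sum_pair hne]

theorem cycleGraph_adjMatrix_mulVec_cos {n : ℕ} (hn : 3 ≤ n) {θ : ℝ} {k : ℕ}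
    (hθ : n * θ = k * (2 * π)) (φ : ℝ) :
    (cycleGraph n).adjMatrix ℝ *ᵥ (fun v : Fin n => cos (v * θ + φ)) =
      (2 * cos θ) • fun v : Fin n => cos (v * θ + φ) := by
  have : NeZero n := ⟨by omega⟩
  have hper : Function.Periodic (fun a : ℕ => cos (a * θ + φ)) n := fun a => by
    have : ((a + n : ℕ) : ℝ) * θ + φ = a * θ + φ + k * (2 * π) := by
      push_cast
      linear_combination hθ
    simp only [this, cos_add_nat_mul_two_pi]
  have hone : ((1 : Fin n) : ℕ) = 1 := (Fin.val_one' n).trans (Nat.mod_eq_of_lt (by omega))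
  ext v
  have hsucc : cos (((v + 1 : Fin n) : ℕ) * θ + φ) = cos (v * θ + φ + θ) := by
    have := hper.map_mod_nat (v + 1)
    simp only [Nat.cast_add, Nat.cast_one] at this
    rw [Fin.val_add, hone, this]
    ring_nf
  have hpred : cos (((v - 1 : Fin n) : ℕ) * θ + φ) = cos (v * θ + φ - θ) := by
    have := hper.map_mod_nat (n - 1 + v)
    simp only [Nat.cast_add, Nat.cast_one, Nat.cast_sub (show 1 ≤ n by omega)] at this
    rw [Fin.val_sub, hone, this,
      ← cos_add_nat_mul_two_pi (v * θ + φ - θ) k]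
    congr 1
    linear_combination hθ
  rw [cycleGraph_adjMatrix_mulVec_apply hn, hsucc, hpred, Pi.smul_apply,
    smul_eq_mul, cos_add, cos_sub]
  ring

theorem two_le_card_eigenvalues_cycleGraph_eq {n : ℕ} (hn : 3 ≤ n) {θ : ℝ} {k : ℕ}
    (hθ : n * θ = k * (2 * π)) (hsin : sin θ ≠ 0) :
    2 ≤ #{i | (adjMatrix_isHermitian (cycleGraph n)).eigenvalues i = 2 * cos θ} := by
  have hli : LinearIndependent ℝ
      ![fun v : Fin n => cos (v * θ + 0), fun v : Fin n => cos (v * θ + -(π / 2))] := by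
    refine LinearIndependent.pair_iff.mpr fun a b hab => ?_
    have h0 : a = 0 := by simpa using congrFun hab ⟨0, by omega⟩
    have h1 : a * cos θ + b * sin θ = 0 := by
      simpa [← sub_eq_add_neg, cos_sub_pi_div_two] using congrFun hab ⟨1, by omega⟩
    exact ⟨h0, by simpa [h0, hsin] using h1⟩
  simpa using card_le_card_eigenvalues_eq (adjMatrix_isHermitian (cycleGraph n)) hli
    fun j => by fin_cases j <;> exact cycleGraph_adjMatrix_mulVec_cos hn hθ _

theorem exists_eigenvalues_cycleGraph_eq {n : ℕ} (hn : 3 ≤ n) {θ : ℝ} {k : ℕ}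
    (hθ : n * θ = k * (2 * π)) :
    ∃ i, (adjMatrix_isHermitian (cycleGraph n)).eigenvalues i = 2 * cos θ := by
  have hne : (fun v : Fin n => cos (v * θ + 0)) ≠ 0 := fun h => by
    simpa using congrFun h ⟨0, by omega⟩
  have hcard := card_le_card_eigenvalues_eq (κ := Unit)
    (adjMatrix_isHermitian (cycleGraph n)) (.of_subsingleton () hne)
    fun _ => cycleGraph_adjMatrix_mulVec_cos hn hθ 0
  obtain ⟨i, hi⟩ := card_pos.mp (Nat.succ_le_iff.mp hcard)
  exact ⟨i, (mem_filter_univ i).mp hi⟩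

theorem cos_pi_div_five_le_cos_pi_div {n : ℕ} (hn : 5 ≤ n) : (1 + √5) / 4 ≤ cos (π / n) := by
  rw [← cos_pi_div_five]
  have := pi_pos
  have : (5 : ℝ) ≤ n := mod_cast hn
  apply cos_le_cos_of_nonneg_of_le_pi (by positivity) (by linarith)
  gcongr

theorem three_le_card_eigenvalues_cycleGraph_ge {n : ℕ} (hn : 5 ≤ n) :
    3 ≤ #{i | 3 / 5 ≤ (adjMatrix_isHermitian (cycleGraph n)).eigenvalues i} := by
  set lam := (adjMatrix_isHermitian (cycleGraph n)).eigenvalues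
  have hn' : (5 : ℝ) ≤ n := mod_cast hn
  have hsin : 0 < sin (2 * (π / n)) := by
    refine sin_pos_of_pos_of_lt_pi (by positivity) ?_
    rw [← mul_div_assoc, div_lt_iff₀ (by positivity)]
    nlinarith [pi_pos]
  have hcos : 3 / 5 ≤ 2 * cos (2 * (π / n)) := by
    have h5 : (11 : ℝ) / 5 ≤ √5 := le_sqrt_of_sq_le (by norm_num)
    have hsq : ((1 + √5) / 4) ^ 2 ≤ cos (π / n) ^ 2 := by
      gcongr
      exact cos_pi_div_five_le_cos_pi_div hn
    rw [cos_two_mul]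
    linarith [sq_sqrt (show (0 : ℝ) ≤ 5 by norm_num)]
  obtain ⟨i, hi⟩ : ∃ i, lam i = 2 * cos 0 :=
    exists_eigenvalues_cycleGraph_eq (k := 0) (by omega) (by simp)
  have hpair : 2 ≤ #{i | lam i = 2 * cos (2 * (π / n))} :=
    two_le_card_eigenvalues_cycleGraph_eq (k := 1) (by omega) (by field_simp; simp) hsin.ne'
  have hnot : i ∉ ({i | lam i = 2 * cos (2 * (π / n))} : Finset (Fin n)) := by
    rw [mem_filter_univ, hi, cos_zero]
    intro h
    nlinarith [sin_sq_add_cos_sq (2 * (π / n))]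
  calc 3 ≤ #(insert i ({i | lam i = 2 * cos (2 * (π / n))} : Finset (Fin n))) := by
        rw [card_insert_of_notMem hnot]; omega
    _ ≤ _ := by
        refine card_le_card (insert_subset ?_ fun j hj => ?_)
        · rw [mem_filter_univ, hi, cos_zero]
          norm_num
        · rw [mem_filter_univ] at hj ⊢
          exact hj ▸ hcos

theorem two_le_card_eigenvalues_cycleGraph_le {n : ℕ} (hn : 5 ≤ n) (hodd : Odd n) :
    2 ≤ #{i | (adjMatrix_isHermitian (cycleGraph n)).eigenvalues i ≤ -8 / 5} := by
  obtain ⟨k, rfl⟩ := hodd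
  set n := 2 * k + 1
  have hn' : (5 : ℝ) ≤ n := mod_cast hn
  have hθ : n * (π - π / n) = k * (2 * π) := by
    field_simp
    push_cast [n]
    ring
  have hsin : 0 < sin (π / n) :=
    sin_pos_of_pos_of_lt_pi (by positivity) (div_lt_self pi_pos (by linarith))
  rw [← sin_pi_sub] at hsin
  refine (two_le_card_eigenvalues_cycleGraph_eq (by omega) hθ hsin.ne').trans
    (card_le_card fun i hi => ?_)
  rw [mem_filter_univ] at hi ⊢
  have h5 : (11 : ℝ) / 5 ≤ √5 := le_sqrt_of_sq_le (by norm_num)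
  rw [hi, cos_pi_sub]
  linarith [cos_pi_div_five_le_cos_pi_div hn]

end CycleSpectrum

section InducedOddCycle

open SimpleGraph

theorem cycleGraph_adj_iff_of_lt {n : ℕ} {i j : Fin n} (h : i < j) :
    (cycleGraph n).Adj i j ↔ (j : ℕ) = i + 1 ∨ (i : ℕ) = 0 ∧ (j : ℕ) + 1 = n := by
  have := j.isLt
  rw [cycleGraph_adj', Fin.coe_sub_iff_lt.mpr h, Fin.coe_sub_iff_le.mpr h.le]
  omega

variable {V : Type*} {G : SimpleGraph V} {u : V}

section MinimalOddClosedWalk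

variable {w : G.Walk u u} (hodd : Odd w.length)
  (hmin : ∀ (v : V) (c : G.Walk v v), Odd c.length → w.length ≤ c.length)

include hodd hmin

theorem sub_le_length_or_length_le_add_sub {i j : ℕ} (hij : i ≤ j) (hj : j ≤ w.length)
    (q : G.Walk (w.getVert i) (w.getVert j)) :
    j - i ≤ q.length ∨ w.length ≤ q.length + (j - i) := by
  let outer : G.Walk _ _ := q.append ((w.drop j).append (w.take i))
  have houter : outer.length = q.length + (w.length - j + i) := by
    simp [outer, w.take_length, w.drop_length, hij.trans hj]
  have hstart : (w.take j).getVert i = w.getVert i := by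
    rw [w.take_getVert, min_eq_right hij]
  let inner : G.Walk _ _ := (((w.take j).drop i).copy hstart rfl).append q.reverse
  have hinner : inner.length = j - i + q.length := by
    simp [inner, w.take_length, (w.take j).drop_length, hj]
  -- The two lengths add up to `w.length + 2 * q.length`.
  obtain hpar | hpar : Odd outer.length ∨ Odd inner.length := by grind
  · have := hmin _ outer hpar
    omega
  · have := hmin _ inner hpar
    omega

theorem getVert_ne_getVert {i j : ℕ} (hij : i < j) (hj : j < w.length) :
    w.getVert i ≠ w.getVert j := fun h => by
  have := sub_le_length_or_length_le_add_sub hodd hmin hij.le hj.le (Walk.nil.copy rfl h)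
  simp only [Walk.length_copy, Walk.length_nil] at this
  omega

theorem adj_getVert_iff {i j : ℕ} (hij : i < j) (hj : j < w.length) :
    G.Adj (w.getVert i) (w.getVert j) ↔ j = i + 1 ∨ i = 0 ∧ j + 1 = w.length := by
  constructor
  · intro hadj
    have := sub_le_length_or_length_le_add_sub hodd hmin hij.le hj.le hadj.toWalk
    rw [Walk.length_cons, Walk.length_nil] at this
    omega
  · rintro (rfl | ⟨rfl, hlast⟩)
    · exact w.adj_getVert_succ (by omega)
    · have := w.adj_getVert_succ hj
      rw [hlast, w.getVert_length] at this
      rwa [w.getVert_zero, adj_comm]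

theorem nonempty_cycleGraph_embedding_of_odd_of_minimal :
    Nonempty (cycleGraph w.length ↪g G) := by
  have hne {i j : Fin w.length} (h : i < j) : w.getVert i ≠ w.getVert j :=
    getVert_ne_getVert hodd hmin h j.isLt
  have hadj {i j : Fin w.length} (h : i < j) :
      G.Adj (w.getVert i) (w.getVert j) ↔ (cycleGraph w.length).Adj i j := by
    rw [cycleGraph_adj_iff_of_lt h, adj_getVert_iff hodd hmin h j.isLt]
  refine ⟨⟨⟨fun i => w.getVert i, fun i j h => ?_⟩, fun {i j} => ?_⟩⟩
  · by_contra hij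
    exact (lt_or_gt_of_ne hij).elim (hne · h) (hne · h.symm)
  · obtain h | rfl | h := lt_trichotomy i j
    · exact hadj h
    · simp
    · rw [adj_comm, adj_comm _ i j]
      exact hadj h

end MinimalOddClosedWalk

theorem exists_odd_cycleGraph_embedding (h : ¬ G.Colorable 2) :
    ∃ n, Odd n ∧ 3 ≤ n ∧ Nonempty (cycleGraph n ↪g G) := by
  classical
  have hex : ∃ n, Odd n ∧ ∃ (u : V) (w : G.Walk u u), w.length = n := by
    simpa [two_colorable_iff_forall_loop_even] using h
  obtain ⟨hodd, u, w, hw⟩ := Nat.find_spec hex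
  rw [← hw] at hodd
  refine ⟨w.length, hodd, ?_, nonempty_cycleGraph_embedding_of_odd_of_minimal hodd
    fun v c hc => hw ▸ Nat.find_min' hex ⟨hc, v, c, rfl⟩⟩
  by_contra hlt
  have hone : w.length = 1 := by grind
  exact (w.adj_of_length_eq_one hone).ne rfl

theorem exists_five_le_odd_cycleGraph_embedding (hG : G.CliqueFree 3) (hnb : ¬ G.Colorable 2) :
    ∃ n, Odd n ∧ 5 ≤ n ∧ Nonempty (cycleGraph n ↪g G) := by
  obtain ⟨n, hodd, hn, ⟨f⟩⟩ := exists_odd_cycleGraph_embedding hnb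
  have hne : n ≠ 3 := by
    rintro rfl
    rw [cycleGraph_three_eq_top] at f
    exact IsContained.not_cliqueFree f.isContained hG
  exact ⟨n, hodd, by grind, ⟨f⟩⟩

end InducedOddCycle

section SumsOfCubes

-- The right-hand side is the chord of `z ↦ z ^ (3 / 2)` between `d ^ 2` and `a ^ 2`, at `y ^ 2`.
theorem cube_le_chord {a d k y : ℝ} (hd : 0 < d) (hk : k * (a + d) = a ^ 2 + a * d + d ^ 2)
    (hdy : d ≤ y) (hya : y ≤ a) : y ^ 3 ≤ k * y ^ 2 + (d ^ 3 - k * d ^ 2) := by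
  have hfactor : (a + d) * (k * y ^ 2 + (d ^ 3 - k * d ^ 2) - y ^ 3) =
      (y - d) * (a - y) * (a * y + d * y + a * d) := by
    linear_combination (y ^ 2 - d ^ 2) * hk
  have hy : 0 < y := hd.trans_le hdy
  have ha : 0 < a := hy.trans_le hya
  have hnonneg : 0 ≤ (y - d) * (a - y) * (a * y + d * y + a * d) :=
    mul_nonneg (mul_nonneg (sub_nonneg.mpr hdy) (sub_nonneg.mpr hya)) (by positivity)
  exact sub_nonneg.mp (nonneg_of_mul_nonneg_right (hfactor ▸ hnonneg) (by positivity))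

variable {ι : Type*}

theorem sum_cube_le_cube_add_cube {t : Finset ι} {x : ι → ℝ} {a d : ℝ} {p q : ι} (hp : p ∈ t)
    (hq : q ∈ t) (hpq : p ≠ q) (ha : 0 ≤ a) (hd : 0 < d) (hdp : d ≤ x p) (hdq : d ≤ x q)
    (hx : ∑ i ∈ t, x i ^ 2 ≤ a ^ 2 + d ^ 2) : ∑ i ∈ t, x i ^ 3 ≤ a ^ 3 + d ^ 3 := by
  classical
  have hle (i) (hi : i ∈ t) : x i ≤ a := by
    obtain ⟨j, hj, hij, hdj⟩ : ∃ j ∈ t, i ≠ j ∧ d ≤ x j := by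
      obtain rfl | hip := eq_or_ne i p
      exacts [⟨q, hq, hpq, hdq⟩, ⟨p, hp, hip, hdp⟩]
    have hpair : x i ^ 2 + x j ^ 2 ≤ a ^ 2 + d ^ 2 := by
      rw [← sum_pair (f := fun i => x i ^ 2) hij]
      exact (sum_le_sum_of_subset_of_nonneg (insert_subset hi (singleton_subset_iff.mpr hj))
        fun _ _ _ => sq_nonneg _).trans hx
    nlinarith
  set k := (a ^ 2 + a * d + d ^ 2) / (a + d)
  have hkad : k * (a + d) = a ^ 2 + a * d + d ^ 2 := div_mul_cancel₀ _ (by positivity)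
  have hak : a ≤ k := by nlinarith
  have hrest (y : ℝ) (hya : y ≤ a) : y ^ 3 ≤ k * y ^ 2 := by
    nlinarith [mul_nonneg (sq_nonneg y) (sub_nonneg.mpr (hya.trans hak))]
  calc ∑ i ∈ t, x i ^ 3
      ≤ ∑ i ∈ t, (k * x i ^ 2 + if i ∈ ({p, q} : Finset ι) then d ^ 3 - k * d ^ 2 else 0) := by
        refine sum_le_sum fun i hi => ?_
        split_ifs with h
        · rw [mem_insert, mem_singleton] at h
          obtain rfl | rfl := h
          exacts [cube_le_chord hd hkad hdp (hle _ hi), cube_le_chord hd hkad hdq (hle _ hi)]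
        · linarith [hrest (x i) (hle i hi)]
    _ = k * ∑ i ∈ t, x i ^ 2 + 2 * (d ^ 3 - k * d ^ 2) := by
        rw [sum_add_distrib, ← mul_sum, sum_ite_mem, inter_eq_right.mpr
          (insert_subset hp (singleton_subset_iff.mpr hq)), sum_pair hpq, two_mul]
    _ ≤ k * (a ^ 2 + d ^ 2) + 2 * (d ^ 3 - k * d ^ 2) := by gcongr
    _ = a ^ 3 + d ^ 3 := by linear_combination (a - d) * hkad

variable [Fintype ι]

theorem two_mul_sq_add_one_lt_sum_sq {lam : ι → ℝ} (hlow : 3 ≤ #{i | 3 / 5 ≤ lam i})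
    (hneg : 2 ≤ #{i | lam i ≤ -8 / 5}) (hcube : ∑ i, lam i ^ 3 ≤ 0) {i₀ : ι} (hpos : 0 ≤ lam i₀)
    (hfive : 5 ≤ lam i₀ ^ 2) : 2 * (lam i₀ ^ 2 + 1) < ∑ i, lam i ^ 2 := by
  classical
  obtain ⟨i₁, hi₁, i₂, hi₂, h₁₂⟩ : ∃ i₁ ∈ ({i | 3 / 5 ≤ lam i} : Finset ι).erase i₀,
      ∃ i₂ ∈ ({i | 3 / 5 ≤ lam i} : Finset ι).erase i₀, i₁ ≠ i₂ := by
    refine one_lt_card.mp ?_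
    have := pred_card_le_card_erase (s := ({i | 3 / 5 ≤ lam i} : Finset ι)) (a := i₀)
    omega
  obtain ⟨p, hp, q, hq, hpq⟩ := one_lt_card.mp hneg
  simp only [mem_erase, mem_filter_univ] at hi₁ hi₂ hp hq
  have hsplit (g : ι → ℝ) : g i₀ + g i₁ + g i₂ + ∑ i ∈ {i₀, i₁, i₂}ᶜ, g i = ∑ i, g i := by
    rw [← sum_add_sum_compl {i₀, i₁, i₂}, sum_insert (by simp [hi₁.1.symm, hi₂.1.symm]),
      sum_pair h₁₂, add_assoc (g i₀)]
  have hmem {i : ι} (hi : lam i ≤ -8 / 5) : i ∈ ({i₀, i₁, i₂} : Finset ι)ᶜ := by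
    simp only [mem_compl, mem_insert, mem_singleton]
    rintro (rfl | rfl | rfl) <;> linarith
  by_contra! hsum
  set s := lam i₀
  set a := √(s ^ 2 - 32 / 25)
  have ha : a ^ 2 = s ^ 2 - 32 / 25 := Real.sq_sqrt (by linarith)
  have ha' : 48 / 25 ≤ a := Real.le_sqrt_of_sq_le (by linarith)
  have hupper : ∑ i ∈ {i₀, i₁, i₂}ᶜ, (-lam i) ^ 3 ≤ a ^ 3 + (8 / 5) ^ 3 := by
    refine sum_cube_le_cube_add_cube (hmem hp) (hmem hq) hpq (by positivity) (by norm_num)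
      (by linarith) (by linarith) ?_
    have := hsplit fun i => lam i ^ 2
    simp only [neg_sq]
    nlinarith
  have hlower : s ^ 3 + 2 * (3 / 5) ^ 3 ≤ ∑ i ∈ {i₀, i₁, i₂}ᶜ, (-lam i) ^ 3 := by
    have h₁ : (3 / 5) ^ 3 ≤ lam i₁ ^ 3 := by gcongr; exact hi₁.2
    have h₂ : (3 / 5) ^ 3 ≤ lam i₂ ^ 3 := by gcongr; exact hi₂.2
    have := hsplit fun i => lam i ^ 3
    simp only [Odd.neg_pow (by decide : Odd 3), sum_neg_distrib]
    linarith
  have hgap : 3 / 2 * a * (s ^ 2 - a ^ 2) ≤ s ^ 3 - a ^ 3 := by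
    nlinarith [mul_nonneg (sq_nonneg (s - a)) (by positivity : 0 ≤ s + a / 2)]
  rw [ha] at hgap
  linarith

end SumsOfCubes

section EdgeCount

open SimpleGraph

theorem card_edgeFinset_cycleGraph {n : ℕ} (hn : 3 ≤ n) : #(cycleGraph n).edgeFinset = n := by
  obtain ⟨n, rfl⟩ := Nat.exists_eq_add_of_le' hn
  have := (cycleGraph (n + 3)).sum_degrees_eq_twice_card_edges
  simp only [cycleGraph_degree_three_le, sum_const, card_univ, Fintype.card_fin,
    smul_eq_mul] at this
  omega

variable {V W : Type*} {G : SimpleGraph V} {H : SimpleGraph W} [Fintype G.edgeSet]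
  [Fintype H.edgeSet]

theorem card_edgeFinset_le_of_embedding (f : H ↪g G) : #H.edgeFinset ≤ #G.edgeFinset := by
  simpa only [edgeFinset_card] using Fintype.card_le_of_embedding f.mapEdgeSet

theorem mem_range_of_adj_of_card_edgeFinset_le (f : H ↪g G) (h : #G.edgeFinset ≤ #H.edgeFinset)
    {v w : V} (hvw : G.Adj v w) : v ∈ Set.range f := by
  simp only [edgeFinset_card] at h
  have hsurj : Function.Surjective f.mapEdgeSet :=
    (Function.Injective.bijective_of_nat_card_le f.mapEdgeSet.injective (by simpa using h)).2
  obtain ⟨⟨e, he⟩, hev⟩ := hsurj ⟨s(v, w), hvw⟩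
  have hv : v ∈ e.map f := by
    rw [show e.map f = s(v, w) from congrArg Subtype.val hev]
    exact Sym2.mem_mk_left v w
  obtain ⟨x, -, hx⟩ := Sym2.mem_map.mp hv
  exact ⟨x, hx⟩

end EdgeCount

section LargestEigenvalue

open SimpleGraph

variable {V : Type*} [Fintype V] [DecidableEq V] {G : SimpleGraph V} [DecidableRel G.Adj]

theorem exists_eigenvalues_eq_kthEig_zero [Nonempty V] :
    ∃ i, (adjMatrix_isHermitian G).eigenvalues i = kthEig G 0 := by
  rw [kthEig, dif_pos Fintype.card_pos]
  exact ⟨_, rfl⟩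

theorem sq_add_one_lt_card_edgeFinset (hG : G.CliqueFree 3) {n : ℕ} (hodd : Odd n) (hn : 5 ≤ n)
    (f : cycleGraph n ↪g G) {i : V} (hpos : 0 ≤ (adjMatrix_isHermitian G).eigenvalues i)
    (hfive : 5 ≤ (adjMatrix_isHermitian G).eigenvalues i ^ 2) :
    (adjMatrix_isHermitian G).eigenvalues i ^ 2 + 1 < #G.edgeFinset := by
  have hA := adjMatrix_isHermitian G
  have hsq : ∑ j, hA.eigenvalues j ^ 2 = 2 * #G.edgeFinset :=
    (trace_pow_eq_sum_eigenvalues_pow hA 2).symm.trans trace_adjMatrix_sq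
  have hcube : ∑ j, hA.eigenvalues j ^ 3 = 0 :=
    (trace_pow_eq_sum_eigenvalues_pow hA 3).symm.trans (trace_adjMatrix_cube_eq_zero hG)
  have hsub : (G.adjMatrix ℝ).submatrix f f = (cycleGraph n).adjMatrix ℝ := f.submatrix_adjMatrix ..
  have hlow := (three_le_card_eigenvalues_cycleGraph_ge hn).trans
    (card_eigenvalues_ge_le_of_submatrix_eq hA (adjMatrix_isHermitian _) f.injective hsub _)
  have hneg := (two_le_card_eigenvalues_cycleGraph_le hn hodd).trans
    (card_eigenvalues_le_le_of_submatrix_eq hA (adjMatrix_isHermitian _) f.injective hsub _)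
  linarith [two_mul_sq_add_one_lt_sum_sq hlow hneg hcube.le hpos hfive]

theorem card_edgeFinset_le_five (hG : G.CliqueFree 3) {n : ℕ} (hodd : Odd n) (hn : 5 ≤ n)
    (f : cycleGraph n ↪g G) (hl : √((#G.edgeFinset : ℝ) - 1) ≤ kthEig G 0) :
    #G.edgeFinset ≤ 5 := by
  have : Nonempty V := ⟨f ⟨0, by omega⟩⟩
  obtain ⟨i, hi⟩ := exists_eigenvalues_eq_kthEig_zero (G := G)
  rw [← hi] at hl
  have hpos := (Real.sqrt_nonneg _).trans hl
  have hsq := (Real.sqrt_le_left hpos).mp hl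
  by_contra! hm
  have hm' : (6 : ℝ) ≤ #G.edgeFinset := mod_cast hm
  linarith [sq_add_one_lt_card_edgeFinset hG hodd hn f hpos (by linarith)]

end LargestEigenvalue

/-- If `G` is non-bipartite with `m` edges and `λ₁ ≥ √(m-1)`, then `G` contains a
triangle, unless `G` is a disjoint union of a 5-cycle and isolated vertices. -/
theorem stmt_1 {V : Type*} [Fintype V] [DecidableEq V] (G : SimpleGraph V)
    [DecidableRel G.Adj] (hnb : ¬ G.Colorable 2)
    (hl : Real.sqrt ((G.edgeFinset.card : ℝ) - 1) ≤ kthEig G 0) :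
    ¬ G.CliqueFree 3 ∨
      ∃ f : Fin 5 ↪ V,
        (∀ i j, G.Adj (f i) (f j) ↔ (SimpleGraph.cycleGraph 5).Adj i j) ∧
        (∀ v, v ∉ Set.range f → ∀ w, ¬ G.Adj v w) := by
  refine or_iff_not_imp_left.mpr fun hG => ?_
  rw [not_not] at hG
  obtain ⟨n, hodd, hn, ⟨f⟩⟩ := exists_five_le_odd_cycleGraph_embedding hG hnb
  have hm : #G.edgeFinset ≤ 5 := card_edgeFinset_le_five hG hodd hn f hl
  have hcycle : #(SimpleGraph.cycleGraph n).edgeFinset = n :=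
    card_edgeFinset_cycleGraph (by omega)
  obtain rfl : n = 5 := by
    have := card_edgeFinset_le_of_embedding f
    omega
  refine ⟨f.toEmbedding, fun _ _ => f.map_adj_iff, fun v hv w hvw => hv ?_⟩
  exact mem_range_of_adj_of_card_edgeFinset_le f (by omega) hvw
end

section
/- Every graph G with m edges whose largest adjacency eigenvalue satisfies λ₁ > √m contains a triangle. Equivalently (Nosal's theorem), every triangle-free graph with m edges satisfies λ₁ ≤ √m. -/
open Matrix Finset

/-!
Evaluate `A²` on an eigenvector `x` of eigenvalue `μ`. The `u`-th entry of `A² x` is a sum of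
entries of `x` over the walks of length two from `u`, and there are `∑ v ∈ N(u), d(v)` of those;
taking sup norms, `|μ|²` is at most the largest such number. In a triangle-free graph `N(u)` is
independent, so no edge is counted twice in `∑ v ∈ N(u), d(v)`, which is therefore at most `m`.
-/

section IndependentSets

variable {V : Type*} {G : SimpleGraph V} [G.LocallyFinite] [Fintype G.edgeSet]

theorem sum_degree_le_card_edgeFinset_of_isIndepSet {s : Finset V}
    (hs : G.IsIndepSet (s : Set V)) : ∑ v ∈ s, G.degree v ≤ #G.edgeFinset := by
  classical
  have incidence_disjoint : (s : Set V).PairwiseDisjoint (G.incidenceFinset ·) := by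
    refine fun v hv w hw hvw ↦ disjoint_left.mpr fun e hev hew ↦ hs hv hw hvw ?_
    rw [SimpleGraph.mem_incidenceFinset] at hev hew
    exact G.adj_of_mem_incidenceSet hvw hev hew
  calc ∑ v ∈ s, G.degree v
      = ∑ v ∈ s, #(G.incidenceFinset v) := by
        simp only [SimpleGraph.card_incidenceFinset_eq_degree]
    _ = #(s.biUnion (G.incidenceFinset ·)) := (card_biUnion incidence_disjoint).symm
    _ ≤ #G.edgeFinset :=
        card_le_card (biUnion_subset.mpr fun v _ ↦ G.incidenceFinset_subset v)

theorem sum_degree_neighborFinset_le_of_cliqueFree_three (hG : G.CliqueFree 3) (u : V) :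
    ∑ v ∈ G.neighborFinset u, G.degree v ≤ #G.edgeFinset :=
  sum_degree_le_card_edgeFinset_of_isIndepSet <| by
    simpa only [SimpleGraph.coe_neighborFinset] using
      SimpleGraph.isIndepSet_neighborSet_of_triangleFree G hG u

end IndependentSets

section EigenvalueBounds

variable {V : Type*} [Fintype V] {G : SimpleGraph V} [DecidableRel G.Adj]

theorem norm_adjMatrix_mulVec_apply_le {R : Type*} [SeminormedRing R] (x : V → R) (v : V) :
    ‖(G.adjMatrix R *ᵥ x) v‖ ≤ G.degree v * ‖x‖ := by
  calc ‖(G.adjMatrix R *ᵥ x) v‖ = ‖∑ w ∈ G.neighborFinset v, x w‖ := by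
        rw [SimpleGraph.adjMatrix_mulVec_apply]
    _ ≤ ∑ _w ∈ G.neighborFinset v, ‖x‖ := norm_sum_le_of_le _ fun w _ ↦ norm_le_pi_norm x w
    _ = G.degree v * ‖x‖ := by
        rw [sum_const, SimpleGraph.card_neighborFinset_eq_degree, nsmul_eq_mul]

theorem norm_adjMatrix_mulVec_mulVec_le {R : Type*} [SeminormedRing R] {D : ℕ}
    (hD : ∀ u, ∑ v ∈ G.neighborFinset u, G.degree v ≤ D) (x : V → R) :
    ‖G.adjMatrix R *ᵥ (G.adjMatrix R *ᵥ x)‖ ≤ D * ‖x‖ := by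
  refine (pi_norm_le_iff_of_nonneg (by positivity)).mpr fun u ↦ ?_
  calc ‖(G.adjMatrix R *ᵥ (G.adjMatrix R *ᵥ x)) u‖
      = ‖∑ v ∈ G.neighborFinset u, (G.adjMatrix R *ᵥ x) v‖ := by
        rw [SimpleGraph.adjMatrix_mulVec_apply]
    _ ≤ ∑ v ∈ G.neighborFinset u, G.degree v * ‖x‖ :=
        norm_sum_le_of_le _ fun v _ ↦ norm_adjMatrix_mulVec_apply_le x v
    _ = (∑ v ∈ G.neighborFinset u, G.degree v : ℕ) * ‖x‖ := by
        rw [← sum_mul, Nat.cast_sum]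
    _ ≤ D * ‖x‖ := by gcongr; exact hD u

variable [DecidableEq V] {𝕜 : Type*} [NormedField 𝕜] {μ : 𝕜}

theorem sq_norm_eigenvalue_le_of_sum_degree_le {D : ℕ}
    (hμ : Module.End.HasEigenvalue (G.adjMatrix 𝕜).toLin' μ)
    (hD : ∀ u, ∑ v ∈ G.neighborFinset u, G.degree v ≤ D) : ‖μ‖ ^ 2 ≤ D := by
  obtain ⟨x, hx⟩ := hμ.exists_hasEigenvector
  have mulVec_x : G.adjMatrix 𝕜 *ᵥ x = μ • x := hx.apply_eq_smul
  have mulVec_mulVec_x : G.adjMatrix 𝕜 *ᵥ (G.adjMatrix 𝕜 *ᵥ x) = μ ^ 2 • x := by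
    rw [mulVec_x, mulVec_smul, mulVec_x, smul_smul, sq]
  refine le_of_mul_le_mul_right ?_ (norm_pos_iff.mpr hx.2)
  calc ‖μ‖ ^ 2 * ‖x‖ = ‖μ ^ 2 • x‖ := by rw [norm_smul, norm_pow]
    _ ≤ D * ‖x‖ := mulVec_mulVec_x ▸ norm_adjMatrix_mulVec_mulVec_le hD x

theorem norm_eigenvalue_le_sqrt_of_cliqueFree_three (hG : G.CliqueFree 3)
    (hμ : Module.End.HasEigenvalue (G.adjMatrix 𝕜).toLin' μ) : ‖μ‖ ≤ √(#G.edgeFinset) :=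
  Real.le_sqrt_of_sq_le <| sq_norm_eigenvalue_le_of_sum_degree_le hμ <|
    sum_degree_neighborFinset_le_of_cliqueFree_three hG

end EigenvalueBounds

section OrderedEigenvalues

variable {V : Type*} [Fintype V] [DecidableEq V] {G : SimpleGraph V} [DecidableRel G.Adj]

theorem hasEigenvalue_adjEig (i : Fin (Fintype.card V)) :
    Module.End.HasEigenvalue (G.adjMatrix ℝ).toLin' (adjEig G i) := by
  rw [Module.End.hasEigenvalue_iff_mem_spectrum, spectrum_toLin']
  exact (adjMatrix_isHermitian G).eigenvalues_mem_spectrum_real _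

theorem abs_kthEig_le_sqrt_of_cliqueFree_three (hG : G.CliqueFree 3) (k : ℕ) :
    |kthEig G k| ≤ √(#G.edgeFinset) := by
  unfold kthEig
  split_ifs
  · exact norm_eigenvalue_le_sqrt_of_cliqueFree_three hG (hasEigenvalue_adjEig _)
  · rw [abs_zero]
    exact Real.sqrt_nonneg _

end OrderedEigenvalues

/-- Every graph with `m` edges and `λ₁ > √m` contains a triangle; equivalently
(Nosal's theorem), every triangle-free graph with `m` edges has `λ₁ ≤ √m`. -/
theorem stmt_3 {V : Type*} [Fintype V] [DecidableEq V] (G : SimpleGraph V)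
    [DecidableRel G.Adj] :
    (Real.sqrt (G.edgeFinset.card : ℝ) < kthEig G 0 → ¬ G.CliqueFree 3) ∧
    (G.CliqueFree 3 → kthEig G 0 ≤ Real.sqrt (G.edgeFinset.card : ℝ)) := by
  have nosal (hG : G.CliqueFree 3) : kthEig G 0 ≤ √(#G.edgeFinset) :=
    (le_abs_self _).trans (abs_kthEig_le_sqrt_of_cliqueFree_three hG 0)
  exact ⟨fun hlt hG ↦ (nosal hG).not_gt hlt, nosal⟩
end

section
/- Let G be a non-bipartite graph on n vertices whose shortest odd cycle has length at least 2k+3 (k ≥ 1). Then the number of edges of G satisfies e(G) ≤ ((n−(2k−1))/2)² + 2k − 1. -/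
open Finset

/-!
Let `C` be a shortest odd closed walk, of length `g`. A walk joining two vertices of `C`, followed
by the arc of `C` of the right parity, is an odd closed walk, hence no shorter than `C`. Applied to
walks of length `0`, this makes `C` a cycle; applied to walks of length `2`, it shows that two
neighbours on `C` of a common vertex are at distance two along `C`. As `g ≥ 5`, no vertex has three
neighbours on `C`. With Mantel's theorem for the `n - g` vertices off `C`, counting degrees gives
`2 e(G) ≤ 2 n + 2 (n - g) + (n - g)² / 2`, and `g ≥ 2k + 3` finishes the proof.
-/

section ShortestOddClosedWalk

open SimpleGraph

variable {V : Type*} {G : SimpleGraph V} {u : V}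

theorem support_toFinset_eq_image_getVert [DecidableEq V] {w : G.Walk u u} (hw : 0 < w.length) :
    w.support.toFinset = (range w.length).image w.getVert := by
  ext v
  simp only [List.mem_toFinset, Walk.mem_support_iff_exists_getVert, mem_image, mem_range]
  constructor
  · rintro ⟨i, rfl, hi⟩
    obtain hi | rfl := hi.lt_or_eq
    · exact ⟨i, hi, rfl⟩
    · exact ⟨0, hw, by rw [Walk.getVert_zero, Walk.getVert_length]⟩
  · rintro ⟨i, hi, rfl⟩
    exact ⟨i, rfl, hi.le⟩

theorem card_support_toFinset_of_isCycle [DecidableEq V] {w : G.Walk u u} (hw : w.IsCycle) :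
    #w.support.toFinset = w.length := by
  have hpos : 0 < w.length := by linarith [hw.three_le_length]
  rw [support_toFinset_eq_image_getVert hpos, card_image_of_injOn, card_range]
  exact hw.getVert_injOn'.mono fun i hi ↦ Nat.le_sub_one_of_lt (mem_range.mp hi)

/-- A closed walk of odd length, no longer than any other closed walk of odd length in the graph.
Minimality is among closed walks rather than cycles, so that closed walks assembled from pieces
can be compared with it directly. -/
structure IsShortestOddClosedWalk (w : G.Walk u u) : Prop where
  odd : Odd w.length
  le_length : ∀ ⦃v : V⦄ (p : G.Walk v v), Odd p.length → w.length ≤ p.length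

theorem exists_isShortestOddClosedWalk (hG : ¬ G.Colorable 2) :
    ∃ (u : V) (w : G.Walk u u), IsShortestOddClosedWalk w := by
  have hodd : ∃ c : Σ u, G.Walk u u, Odd c.2.length := by
    simpa [two_colorable_iff_forall_loop_even] using hG
  obtain ⟨⟨u, w⟩, hw, hmin⟩ :=
    exists_minimalFor_of_wellFoundedLT _ (fun c : Σ u, G.Walk u u ↦ c.2.length) hodd
  exact ⟨u, w, hw, fun v p hp ↦ (le_total _ _).elim id (hmin (j := ⟨v, p⟩) hp)⟩

namespace IsShortestOddClosedWalk

variable {w : G.Walk u u} {i j : ℕ}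

theorem le_length_add_sub_of_odd (hw : IsShortestOddClosedWalk w) (hij : i ≤ j)
    (hj : j ≤ w.length) (p : G.Walk (w.getVert i) (w.getVert j))
    (hp : Odd (p.length + (j - i))) : w.length ≤ p.length + (j - i) := by
  have hij' : (w.drop i).getVert (j - i) = w.getVert j := by
    rw [Walk.drop_getVert, Nat.add_sub_cancel' hij]
  let arc : G.Walk (w.getVert i) (w.getVert j) := ((w.drop i).take (j - i)).copy rfl hij'
  have hlen : (p.append arc.reverse).length = p.length + (j - i) := by
    simp only [arc, Walk.length_append, Walk.length_reverse, Walk.length_copy,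
      Walk.take_length, Walk.drop_length]
    omega
  exact hlen ▸ hw.le_length _ (hlen.symm ▸ hp)

theorem sub_le_length_of_even (hw : IsShortestOddClosedWalk w) (hij : i ≤ j)
    (hj : j ≤ w.length) (p : G.Walk (w.getVert i) (w.getVert j))
    (hp : Even (p.length + (j - i))) : j - i ≤ p.length := by
  let arc : G.Walk (w.getVert j) (w.getVert i) := (w.drop j).append (w.take i)
  have hlen : (p.append arc).length = p.length + (w.length - (j - i)) := by
    simp only [arc, Walk.length_append, Walk.take_length, Walk.drop_length]
    omega
  have hle := hw.le_length (p.append arc) (by have := hw.odd; grind)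
  omega

theorem getVert_ne_getVert (hw : IsShortestOddClosedWalk w) (hij : i < j) (hj : j ≤ w.length)
    (hlt : j - i < w.length) : w.getVert i ≠ w.getVert j := by
  intro h
  let p : G.Walk (w.getVert i) (w.getVert j) := Walk.nil.copy rfl h
  have hp : p.length = 0 := by simp only [p, Walk.length_copy, Walk.length_nil]
  rcases Nat.even_or_odd (p.length + (j - i)) with hpar | hpar
  · have := hw.sub_le_length_of_even hij.le hj p hpar
    omega
  · have := hw.le_length_add_sub_of_odd hij.le hj p hpar
    omega

theorem three_le_length (hw : IsShortestOddClosedWalk w) : 3 ≤ w.length := by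
  have hne : w.length ≠ 1 := fun h ↦ (Walk.adj_of_length_eq_one h).ne rfl
  have := hw.odd
  grind

theorem isCycle (hw : IsShortestOddClosedWalk w) : w.IsCycle := by
  refine Walk.isCycle_iff_isPath_tail_and_le_length.mpr ⟨?_, hw.three_le_length⟩
  rw [← Walk.IsPath.getVert_injOn_iff]
  intro i hi j hj h
  simp only [Set.mem_ofPred_eq, Walk.length_tail] at hi hj
  rw [Walk.getVert_tail, Walk.getVert_tail] at h
  rcases lt_trichotomy i j with hij | hij | hij
  · exact absurd h (hw.getVert_ne_getVert (by omega) (by omega) (by omega))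
  · exact hij
  · exact absurd h.symm (hw.getVert_ne_getVert (by omega) (by omega) (by omega))

theorem eq_add_two_or_add_two_eq_of_adj (hw : IsShortestOddClosedWalk w) {x : V} (hij : i < j)
    (hj : j < w.length) (hxi : G.Adj x (w.getVert i)) (hxj : G.Adj x (w.getVert j)) :
    j = i + 2 ∨ j + 2 = i + w.length := by
  let p : G.Walk (w.getVert i) (w.getVert j) := .cons hxi.symm (.cons hxj .nil)
  have hp : p.length = 2 := rfl
  have hodd := hw.odd
  rcases Nat.even_or_odd (p.length + (j - i)) with hpar | hpar
  · have := hw.sub_le_length_of_even hij.le hj.le p hpar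
    grind
  · have := hw.le_length_add_sub_of_odd hij.le hj.le p hpar
    grind

theorem card_filter_adj_support_le_two [DecidableEq V] [DecidableRel G.Adj]
    (hw : IsShortestOddClosedWalk w) (h3 : 3 < w.length) (x : V) :
    #{y ∈ w.support.toFinset | G.Adj x y} ≤ 2 := by
  rw [support_toFinset_eq_image_getVert hw.odd.pos, filter_image]
  refine card_image_le.trans (not_lt.mp fun h ↦ ?_)
  obtain ⟨a, b, c, ha, hb, hc, hab, hac, hbc⟩ := two_lt_card_iff.mp h
  simp only [mem_filter, mem_range] at ha hb hc
  have hdiff {i j : ℕ} (hi : i < w.length ∧ G.Adj x (w.getVert i))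
      (hj : j < w.length ∧ G.Adj x (w.getVert j)) (hij : i < j) :
      j = i + 2 ∨ j + 2 = i + w.length :=
    hw.eq_add_two_or_add_two_eq_of_adj hij hj.1 hi.2 hj.2
  -- Modulo the odd length, the differences of the three positions are `±2` and sum to zero, so
  -- the length would divide `2` or `6`.
  have := hw.odd
  have := hdiff ha hb
  have := hdiff hb ha
  have := hdiff ha hc
  have := hdiff hc ha
  have := hdiff hb hc
  have := hdiff hc hb
  grind

end IsShortestOddClosedWalk

end ShortestOddClosedWalk

section EdgeCount

open SimpleGraph

variable {V : Type*} {G : SimpleGraph V} [DecidableRel G.Adj]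

theorem four_mul_card_edgeFinset_le_sq_of_cliqueFree [Fintype V] (hG : G.CliqueFree 3) :
    4 * #G.edgeFinset ≤ Fintype.card V ^ 2 := by
  have hturan := hG.card_edgeFinset_le
  have hchoose : (Fintype.card V % 2).choose 2 = 0 := Nat.choose_eq_zero_of_lt (by omega)
  simp only [hchoose] at hturan
  have := Nat.sub_le (Fintype.card V ^ 2) ((Fintype.card V % 2) ^ 2)
  omega

theorem degree_induce_eq_card_filter_adj (s : Finset V) (x : (s : Set V)) :
    (G.induce (s : Set V)).degree x = #{y ∈ s | G.Adj x y} := by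
  rw [← card_neighborFinset_eq_degree, ← card_map (Function.Embedding.subtype (· ∈ (s : Set V)))]
  congr 1
  ext y
  simp [and_comm]

theorem sum_card_filter_adj_eq_two_mul_card_edgeFinset_induce (s : Finset V) :
    ∑ x ∈ s, #{y ∈ s | G.Adj x y} = 2 * #(G.induce (s : Set V)).edgeFinset := by
  rw [← sum_degrees_eq_twice_card_edges, ← sum_coe_sort]
  exact sum_congr rfl fun x _ ↦ (degree_induce_eq_card_filter_adj s x).symm

variable [Fintype V] [DecidableEq V]

theorem two_mul_card_edgeFinset_eq_sum_add_sum_compl_add_induce (s : Finset V) :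
    2 * #G.edgeFinset = ∑ x, #{y ∈ s | G.Adj x y} + ∑ x ∈ sᶜ, #{y ∈ s | G.Adj x y} +
      2 * #(G.induce (↑sᶜ : Set V)).edgeFinset := by
  have hdeg (x : V) : G.degree x = #{y ∈ s | G.Adj x y} + #{y ∈ sᶜ | G.Adj x y} := by
    rw [← card_neighborFinset_eq_degree, neighborFinset_eq_filter,
      ← card_union_of_disjoint (disjoint_filter_filter disjoint_compl_right), ← filter_union,
      union_compl]
  have hcross : ∑ x ∈ s, #{y ∈ sᶜ | G.Adj x y} = ∑ x ∈ sᶜ, #{y ∈ s | G.Adj x y} := by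
    simpa only [bipartiteAbove, bipartiteBelow, G.adj_comm] using
      sum_card_bipartiteAbove_eq_sum_card_bipartiteBelow G.Adj (s := s) (t := sᶜ)
  calc 2 * #G.edgeFinset
      = ∑ x, #{y ∈ s | G.Adj x y} + ∑ x, #{y ∈ sᶜ | G.Adj x y} := by
        rw [← sum_degrees_eq_twice_card_edges, ← sum_add_distrib]
        exact sum_congr rfl fun x _ ↦ hdeg x
    _ = _ := by
        rw [← sum_add_sum_compl s fun x ↦ #{y ∈ sᶜ | G.Adj x y}, hcross,
          sum_card_filter_adj_eq_two_mul_card_edgeFinset_induce, add_assoc]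

theorem four_mul_card_edgeFinset_le_of_forall_card_filter_adj_le (hG : G.CliqueFree 3)
    {s : Finset V} {d : ℕ} (hs : ∀ x, #{y ∈ s | G.Adj x y} ≤ d) :
    4 * #G.edgeFinset ≤ 2 * d * Fintype.card V + 2 * d * #sᶜ + #sᶜ ^ 2 := by
  have hall : ∑ x, #{y ∈ s | G.Adj x y} ≤ Fintype.card V * d :=
    sum_le_card_nsmul _ _ _ fun x _ ↦ hs x
  have hcompl : ∑ x ∈ sᶜ, #{y ∈ s | G.Adj x y} ≤ #sᶜ * d :=
    sum_le_card_nsmul _ _ _ fun x _ ↦ hs x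
  have hmantel : 4 * #(G.induce (↑sᶜ : Set V)).edgeFinset ≤ #sᶜ ^ 2 := by
    have hfree := hG.comap (Embedding.induce (G := G) (↑sᶜ : Set V)).isContained
    exact (four_mul_card_edgeFinset_le_sq_of_cliqueFree hfree).trans_eq
      (by simp only [coe_sort_coe, Fintype.card_coe])
  have := two_mul_card_edgeFinset_eq_sum_add_sum_compl_add_induce (G := G) s
  linarith

end EdgeCount

/-- If `G` is a non-bipartite graph on `n` vertices whose shortest odd cycle has
length at least `2k+3` (where `k ≥ 1`), then
`e(G) ≤ ((n-(2k-1))/2)² + 2k - 1`. -/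
theorem stmt_12 {V : Type*} [Fintype V] [DecidableEq V] (G : SimpleGraph V)
    [DecidableRel G.Adj] (n k : ℕ) (hn : Fintype.card V = n) (hk : 1 ≤ k)
    (hnb : ¬ G.Colorable 2)
    (hodd : ∀ (v : V) (w : G.Walk v v), w.IsCycle → Odd w.length →
      2 * k + 3 ≤ w.length) :
    (G.edgeFinset.card : ℝ) ≤ (((n : ℝ) - (2 * k - 1)) / 2) ^ 2 + 2 * k - 1 := by
  obtain ⟨u, w, hw⟩ := exists_isShortestOddClosedWalk hnb
  have hg : 2 * k + 3 ≤ w.length := hodd u w hw.isCycle hw.odd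
  have htri : G.CliqueFree 3 := by
    intro s hs
    obtain ⟨v, c, hc, hc3⟩ := SimpleGraph.is3Clique_iff_exists_cycle_length_three.mp ⟨s, hs⟩
    have := hodd v c hc (hc3 ▸ by decide)
    omega
  have hcount := four_mul_card_edgeFinset_le_of_forall_card_filter_adj_le htri
    (hw.card_filter_adj_support_le_two (by omega))
  set t := #w.support.toFinsetᶜ
  have ht : t + (2 * k + 3) ≤ n := by
    have := card_compl_add_card w.support.toFinset
    rw [card_support_toFinset_of_isCycle hw.isCycle, hn] at this
    omega
  rw [hn] at hcount
  have hcountR : (4 : ℝ) * #G.edgeFinset ≤ 4 * n + 4 * t + t ^ 2 := by exact_mod_cast hcount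
  have htR : (t : ℝ) ≤ n - (2 * k + 3) := by
    rw [le_sub_iff_add_le]
    exact_mod_cast ht
  have htsq : (t : ℝ) ^ 2 ≤ (n - (2 * k + 3)) ^ 2 := by gcongr
  linarith
end

section
/- (Erdős) Every non-bipartite triangle-free graph on n vertices has at most (n−1)²/4 + 1 edges. -/
open Finset

/-!
Take a shortest closed walk of odd length `L` in `G`; it exists since `G` is not bipartite, and
`5 ≤ L` since `G` has no triangle. A shortcut between two vertices of this walk would close up to a
shorter odd closed walk with one of the two arcs between them, namely the one whose length has the
right parity. Hence its `L` vertices are distinct, and any two of them with a common neighbour are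
at distance two along the walk, so that every vertex of `G` has at most two neighbours on it.
Counting the edges that meet the walk by means of this bound, and the remaining ones by Mantel's
theorem on the other `n - L` vertices, gives
`4 * e(G) ≤ (n - L) ^ 2 + 4 * (n + (n - L))`, which is largest at `L = 5`.
-/

section OddLoop

variable {V : Type*} {G : SimpleGraph V} {u : V} {w : G.Walk u u}

theorem exists_walk_getVert_length_eq {u v : V} (w : G.Walk u v) {i j : ℕ} (hij : i ≤ j)
    (hj : j ≤ w.length) :
    ∃ p : G.Walk (w.getVert i) (w.getVert j), p.length = j - i := by
  have hend : (w.drop i).getVert (j - i) = w.getVert j := by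
    rw [SimpleGraph.Walk.drop_getVert, Nat.add_sub_cancel' hij]
  refine ⟨((w.drop i).take (j - i)).copy rfl hend, ?_⟩
  rw [SimpleGraph.Walk.length_copy, SimpleGraph.Walk.take_length, SimpleGraph.Walk.drop_length]
  omega

theorem five_le_length_of_odd_of_cliqueFree_three (h3 : G.CliqueFree 3) (w : G.Walk u u)
    (hw : Odd w.length) : 5 ≤ w.length := by
  match w with
  | .nil | .cons _ (.cons _ .nil) | .cons _ (.cons _ (.cons _ (.cons _ .nil))) =>
    exact absurd hw (by simp [Nat.odd_iff])
  | .cons h .nil => exact absurd rfl h.ne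
  | .cons huv (.cons hvx (.cons hxu .nil)) =>
    classical exact absurd (SimpleGraph.is3Clique_triple_iff.2 ⟨huv, hxu.symm, hvx⟩) (h3 _)
  | .cons _ (.cons _ (.cons _ (.cons _ (.cons _ _)))) =>
    simp only [SimpleGraph.Walk.length_cons]
    omega

/-- A closed walk of odd length, shortest among all those of the graph: a cycle whose length is the
odd girth of `G`, encoded as a closed walk so that its minimality applies to any closed walk. -/
structure IsShortestOddLoop (w : G.Walk u u) : Prop where
  odd_length : Odd w.length
  length_le : ∀ ⦃v : V⦄ (p : G.Walk v v), Odd p.length → w.length ≤ p.length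

theorem exists_isShortestOddLoop_of_not_colorable_two (hnb : ¬ G.Colorable 2) :
    ∃ (u : V) (w : G.Walk u u), IsShortestOddLoop w := by
  classical
  have hodd : ∃ L, ∃ (u : V) (w : G.Walk u u), w.length = L ∧ Odd L := by
    simpa [SimpleGraph.two_colorable_iff_forall_loop_even] using hnb
  obtain ⟨u, w, hlen, hw⟩ := Nat.find_spec hodd
  refine ⟨u, w, hlen ▸ hw, fun v p hp => ?_⟩
  exact hlen ▸ Nat.find_min' hodd ⟨v, p, rfl, hp⟩

namespace IsShortestOddLoop

theorem length_le_sub_add_length (h : IsShortestOddLoop w) {i j : ℕ} (hij : i ≤ j)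
    (hj : j ≤ w.length) (p : G.Walk (w.getVert i) (w.getVert j)) (hp : Odd (j - i + p.length)) :
    w.length ≤ j - i + p.length := by
  obtain ⟨q, hq⟩ := exists_walk_getVert_length_eq w hij hj
  have hlen : (q.append p.reverse).length = j - i + p.length := by
    rw [SimpleGraph.Walk.length_append, SimpleGraph.Walk.length_reverse, hq]
  exact hlen ▸ h.length_le _ (hlen ▸ hp)

theorem sub_le_length (h : IsShortestOddLoop w) {i j : ℕ} (hij : i ≤ j)
    (hj : j ≤ w.length) (p : G.Walk (w.getVert i) (w.getVert j)) (hp : Even (j - i + p.length)) :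
    j - i ≤ p.length := by
  let outerArc := (w.drop j).append (w.take i)
  have hlen : (outerArc.append p).length = w.length - j + i + p.length := by
    simp only [outerArc, SimpleGraph.Walk.length_append, SimpleGraph.Walk.take_length,
      SimpleGraph.Walk.drop_length]
    omega
  have hodd := h.odd_length
  have hle := h.length_le (outerArc.append p)
  rw [hlen] at hle
  grind

theorem injOn_getVert (h : IsShortestOddLoop w) : Set.InjOn w.getVert (Set.Iio w.length) := by
  have hne : ∀ i j, i < j → j < w.length → w.getVert i ≠ w.getVert j := by
    intro i j hij hj heq
    let p : G.Walk (w.getVert i) (w.getVert j) := SimpleGraph.Walk.nil.copy rfl heq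
    have hp : p.length = 0 := SimpleGraph.Walk.length_copy ..
    rcases Nat.even_or_odd (j - i + p.length) with heven | hodd
    · have := h.sub_le_length hij.le hj.le p heven
      omega
    · have := h.length_le_sub_add_length hij.le hj.le p hodd
      omega
  intro i hi j hj heq
  by_contra hij
  rcases Nat.lt_or_gt_of_ne hij with hlt | hgt
  · exact hne i j hlt hj heq
  · exact hne j i hgt hi heq.symm

theorem eq_add_two_or_add_two_eq_add_length (h : IsShortestOddLoop w) {v : V} {i j : ℕ}
    (hij : i < j) (hj : j < w.length) (hvi : G.Adj v (w.getVert i)) (hvj : G.Adj v (w.getVert j)) :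
    j = i + 2 ∨ j + 2 = i + w.length := by
  let p : G.Walk (w.getVert i) (w.getVert j) := .cons hvi.symm (.cons hvj .nil)
  have hp : p.length = 2 := rfl
  have hodd := h.odd_length
  have hinner := h.sub_le_length hij.le hj.le p
  have houter := h.length_le_sub_add_length hij.le hj.le p
  rw [hp] at hinner houter
  grind

theorem card_image_getVert [DecidableEq V] (h : IsShortestOddLoop w) :
    #((range w.length).image w.getVert) = w.length := by
  rw [card_image_of_injOn (by simpa only [coe_range] using h.injOn_getVert), card_range]

theorem length_le_card [Fintype V] (h : IsShortestOddLoop w) : w.length ≤ Fintype.card V := by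
  classical exact h.card_image_getVert ▸ card_le_univ _

theorem card_neighborFinset_inter_image_getVert_le_two [DecidableEq V] (h : IsShortestOddLoop w)
    (hL : 3 < w.length) (v : V) [Fintype (G.neighborSet v)] :
    #(G.neighborFinset v ∩ (range w.length).image w.getVert) ≤ 2 := by
  by_contra! hcard
  obtain ⟨a, ha, b, hb, c, hc, hab, hac, hbc⟩ := two_lt_card.1 hcard
  simp only [mem_inter, SimpleGraph.mem_neighborFinset, mem_image, mem_range] at ha hb hc
  obtain ⟨hva, i, hi, rfl⟩ := ha
  obtain ⟨hvb, j, hj, rfl⟩ := hb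
  obtain ⟨hvc, k, hk, rfl⟩ := hc
  have hij : i ≠ j := ne_of_apply_ne w.getVert hab
  have hik : i ≠ k := ne_of_apply_ne w.getVert hac
  have hjk : j ≠ k := ne_of_apply_ne w.getVert hbc
  obtain ⟨m, hm⟩ := h.odd_length
  have hdist : ∀ {x y}, y < w.length → G.Adj v (w.getVert x) → G.Adj v (w.getVert y) → x < y →
      y = x + 2 ∨ y + 2 = x + w.length :=
    fun hy hvx hvy hxy => h.eq_add_two_or_add_two_eq_add_length hxy hy hvx hvy
  have := hdist hj hva hvb
  have := hdist hi hvb hva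
  have := hdist hk hva hvc
  have := hdist hi hvc hva
  have := hdist hk hvb hvc
  have := hdist hj hvc hvb
  -- Three indices pairwise at distance two on a cycle of length `L` force `L = 3` or `L = 6`.
  omega

end IsShortestOddLoop

end OddLoop

section EdgeCount

variable {V : Type*} [Fintype V] (G : SimpleGraph V) [DecidableRel G.Adj]

variable {G} in
theorem mul_card_edgeFinset_le_of_cliqueFree {r : ℕ} (h : G.CliqueFree (r + 1)) :
    2 * r * #G.edgeFinset ≤ (r - 1) * Fintype.card V ^ 2 := by
  have hturan : #G.edgeFinset ≤ #(SimpleGraph.turanGraph (Fintype.card V) r).edgeFinset :=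
    h.card_edgeFinset_le.trans_eq SimpleGraph.card_edgeFinset_turanGraph.symm
  exact (Nat.mul_le_mul_left _ hturan).trans SimpleGraph.mul_card_edgeFinset_turanGraph_le

variable [DecidableEq V] (s : Finset V)

theorem sum_card_neighborFinset_inter_eq_sum_degree :
    ∑ v, #(G.neighborFinset v ∩ s) = ∑ v ∈ s, G.degree v := by
  convert sum_card_bipartiteAbove_eq_sum_card_bipartiteBelow (s := univ) (t := s) G.Adj using 3
    with v _ v _
  · ext x
    simp [and_comm]
  · rw [← SimpleGraph.card_neighborFinset_eq_degree]
    congr 1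
    ext x
    simp [G.adj_comm]

theorem sum_card_neighborFinset_inter_self_eq_two_mul_card_edgeFinset_induce :
    ∑ v ∈ s, #(G.neighborFinset v ∩ s) = 2 * #(G.induce (s : Set V)).edgeFinset := by
  rw [← SimpleGraph.sum_degrees_eq_twice_card_edges, ← sum_coe_sort s]
  refine sum_congr rfl fun v _ => ?_
  have hmap := congrArg card (SimpleGraph.map_neighborFinset_induce (G := G) (s := (s : Set V)) v)
  rw [card_map, toFinset_coe] at hmap
  rw [← hmap, SimpleGraph.card_neighborFinset_eq_degree]
  congr!

theorem two_mul_card_edgeFinset_eq_sum_add_sum_compl_add :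
    2 * #G.edgeFinset = ∑ v, #(G.neighborFinset v ∩ s) + ∑ v ∈ sᶜ, #(G.neighborFinset v ∩ s) +
      2 * #(G.induce (↑sᶜ : Set V)).edgeFinset := by
  have hdegree : ∀ v, G.degree v = #(G.neighborFinset v ∩ s) + #(G.neighborFinset v ∩ sᶜ) := by
    intro v
    rw [← SimpleGraph.card_neighborFinset_eq_degree, ← sdiff_eq_inter_compl,
      card_inter_add_card_sdiff]
  rw [← SimpleGraph.sum_degrees_eq_twice_card_edges, ← sum_add_sum_compl s,
    ← sum_card_neighborFinset_inter_eq_sum_degree, sum_congr rfl fun v _ => hdegree v,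
    sum_add_distrib, sum_card_neighborFinset_inter_self_eq_two_mul_card_edgeFinset_induce,
    add_assoc]

variable {G s} in
theorem two_mul_card_edgeFinset_le_of_card_neighborFinset_inter_le {d : ℕ}
    (hd : ∀ v, #(G.neighborFinset v ∩ s) ≤ d) :
    2 * #G.edgeFinset ≤
      (Fintype.card V + #sᶜ) * d + 2 * #(G.induce (↑sᶜ : Set V)).edgeFinset := by
  have huniv : ∑ v, #(G.neighborFinset v ∩ s) ≤ Fintype.card V * d :=
    sum_le_card_nsmul _ _ _ fun v _ => hd v
  have hcompl : ∑ v ∈ sᶜ, #(G.neighborFinset v ∩ s) ≤ #sᶜ * d :=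
    sum_le_card_nsmul _ _ _ fun v _ => hd v
  rw [two_mul_card_edgeFinset_eq_sum_add_sum_compl_add G s, add_mul]
  gcongr

end EdgeCount

theorem IsShortestOddLoop.four_mul_card_edgeFinset_le {V : Type*} [Fintype V] {G : SimpleGraph V}
    [DecidableRel G.Adj] {u : V} {w : G.Walk u u} (h : IsShortestOddLoop w)
    (h3 : G.CliqueFree 3) :
    4 * #G.edgeFinset ≤ (Fintype.card V - w.length) ^ 2 +
      4 * (Fintype.card V + (Fintype.card V - w.length)) := by
  classical
  have hL : 5 ≤ w.length := five_le_length_of_odd_of_cliqueFree_three h3 w h.odd_length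
  let C := (range w.length).image w.getVert
  have hcard : #Cᶜ = Fintype.card V - w.length := by rw [card_compl, h.card_image_getVert]
  have hedges := two_mul_card_edgeFinset_le_of_card_neighborFinset_inter_le (s := C)
    fun v => h.card_neighborFinset_inter_image_getVert_le_two (by omega) v
  have hmantel := mul_card_edgeFinset_le_of_cliqueFree (r := 2)
    (h3.comap (SimpleGraph.Embedding.induce (G := G) (↑Cᶜ : Set V)).toCopy.isContained)
  simp only [coe_sort_coe, Fintype.card_coe, hcard] at hmantel
  rw [hcard] at hedges
  omega

/-- (Erdős) Every non-bipartite triangle-free graph on `n` vertices has at most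
`(n-1)²/4 + 1` edges. -/
theorem stmt_14 {V : Type*} [Fintype V] [DecidableEq V] (G : SimpleGraph V)
    [DecidableRel G.Adj] (n : ℕ) (hn : Fintype.card V = n)
    (h3 : G.CliqueFree 3) (hnb : ¬ G.Colorable 2) :
    (G.edgeFinset.card : ℝ) ≤ ((n : ℝ) - 1) ^ 2 / 4 + 1 := by
  obtain ⟨u, w, hw⟩ := exists_isShortestOddLoop_of_not_colorable_two hnb
  have hL : (5 : ℝ) ≤ w.length := by
    exact_mod_cast five_le_length_of_odd_of_cliqueFree_three h3 w hw.odd_length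
  have hLn : w.length ≤ n := hn ▸ hw.length_le_card
  have hedges := hn ▸ hw.four_mul_card_edgeFinset_le h3
  rify [hLn] at hedges
  rify at hLn
  have hgap : 0 ≤ ((w.length : ℝ) - 5) * (2 * n - w.length - 1) :=
    mul_nonneg (by linarith) (by linarith)
  linarith
end
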